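/- There are constants C, c > 0 such that for every t > 0 there exist two sequences of maps (A_n^t)_{n ∈ ℕ} and (B_n^t)_{n ∈ ℕ}, sending finitely supported functions ℤ → ℂ to functions ℤ → ℂ, such that for every finitely supported f : ℤ → ℂ: (i) ℳ_{2^n} f = A_n^t f + B_n^t f for all n ∈ ℕ; (ii) sup_{λ>0} λ · #{x ∈ ℤ : sup_{n ∈ ℕ} |A_n^t f(x)| > λ} ≤ C t ‖f‖_{ℓ¹(ℤ)}; (iii) ‖ sup_{n ∈ ℕ} |B_n^t f| ‖_{ℓ²(ℤ)} ≤ C exp(−c √t) ‖f‖_{ℓ²(ℤ)}. -/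

import Mathlib

open scoped BigOperators

/-- The set of primes `p ≤ N`. -/
def primesUpTo (N : ℕ) : Finset ℕ := (Finset.range (N + 1)).filter Nat.Prime

/-- `ϑ(N) = Σ_{p ∈ ℙ_N} log p`. -/
noncomputable def theta (N : ℕ) : ℝ := ∑ p ∈ primesUpTo N, Real.log p

/-- The weighted average `ℳ_N f(x) = (1/ϑ(N)) Σ_{p ∈ ℙ_N} f(x + p) log p`. -/
noncomputable def weightedPrimeAvg (f : ℤ → ℂ) (N : ℕ) (x : ℤ) : ℂ :=
  ((theta N : ℂ))⁻¹ * ∑ p ∈ primesUpTo N, f (x + p) * (Real.log p : ℂ)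

/-!
Selberg's sieve majorises the primes beyond a level `R` by the square of a divisor sum, and
expanding this square in Ramanujan sums `c_q` turns the averages over primes into a combination of
averages weighted by `c_q`, with coefficients `q^{-1 + o(1)}`. Averages weighted by different
Ramanujan sums are nearly orthogonal, so the maximal operator of a whole dyadic block `q ∼ 2^s` has
`ℓ²` norm `2^{-(1/2 - o(1)) s}`.

Sieving only by the primes larger than `2^m`, where `m ∼ √t`, multiplies the term `q = 1`, an
average over an interval, by `m² ≤ t`, and leaves among the others only moduli `q > 2^m`, whose
total contribution is exponentially small in `m`. Hence `A` is the average over primes where it is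
at most a multiple of `m²` times the interval average, which is of weak type `(1, 1)` by Hopf's
maximal inequality, and `B` is what remains.
-/

namespace PrimeAverages

open Finset MeasureTheory
open scoped ENNReal

/-! ### The `ℓ²` norm on the integers -/

/-- The `ℓ²(ℤ)` norm of a function with values in any type with an extended norm; it is used both
for real functions and for `[0, ∞]`-valued maximal functions. -/
noncomputable def l2Norm {ε : Type*} [ENorm ε] (F : ℤ → ε) : ℝ≥0∞ := eLpNorm F 2 Measure.count

section L2Norm

variable {ε : Type*} [ENorm ε]

lemma l2Norm_sq (F : ℤ → ε) : l2Norm F ^ 2 = ∑' x, ‖F x‖ₑ ^ 2 := by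
  rw [l2Norm, eLpNorm_eq_lintegral_rpow_enorm_toReal two_ne_zero ENNReal.ofNat_ne_top,
    ← ENNReal.rpow_natCast, ← ENNReal.rpow_mul]
  simp [lintegral_count]

lemma l2Norm_le_of_tsum_sq_le {F : ℤ → ε} {a : ℝ≥0∞} (h : ∑' x, ‖F x‖ₑ ^ 2 ≤ a ^ 2) :
    l2Norm F ≤ a :=
  (ENNReal.pow_le_pow_left_iff two_ne_zero).1 (l2Norm_sq F ▸ h)

lemma l2Norm_mono {δ : Type*} [ENorm δ] {F : ℤ → ε} {G : ℤ → δ} (h : ∀ x, ‖F x‖ₑ ≤ ‖G x‖ₑ) :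
    l2Norm F ≤ l2Norm G :=
  eLpNorm_mono_enorm h

lemma l2Norm_comp_add_right (F : ℤ → ε) (a : ℤ) : l2Norm (fun x => F (x + a)) = l2Norm F := by
  refine (ENNReal.pow_right_strictMono two_ne_zero).injective ?_
  simpa only [l2Norm_sq, Equiv.coe_addRight] using (Equiv.addRight a).tsum_eq fun x => ‖F x‖ₑ ^ 2

lemma l2Norm_sum_le {ι : Type*} (s : Finset ι) (F : ι → ℤ → ℝ≥0∞) :
    l2Norm (fun x => ∑ i ∈ s, F i x) ≤ ∑ i ∈ s, l2Norm (F i) := by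
  simpa only [l2Norm, Finset.sum_fn] using
    eLpNorm_sum_le (μ := Measure.count) (fun i _ => .of_discrete (f := F i)) one_le_two

lemma l2Norm_add_le (F G : ℤ → ℝ≥0∞) : l2Norm (fun x => F x + G x) ≤ l2Norm F + l2Norm G :=
  eLpNorm_add_le .of_discrete .of_discrete one_le_two

lemma l2Norm_sub_le {E : Type*} [NormedAddCommGroup E] (F G : ℤ → E) :
    l2Norm (fun x => F x - G x) ≤ l2Norm F + l2Norm G :=
  eLpNorm_sub_le .of_discrete .of_discrete one_le_two

lemma l2Norm_const_mul (c : ℝ≥0∞) (F : ℤ → ℝ≥0∞) : l2Norm (fun x => c * F x) = c * l2Norm F := by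
  refine (ENNReal.pow_right_strictMono two_ne_zero).injective ?_
  simp only [l2Norm_sq, mul_pow, enorm_eq_self, ENNReal.tsum_mul_left]

lemma l2Norm_iSup_le_of_monotone {F : ℕ → ℤ → ℝ≥0∞} (hF : Monotone F) {a : ℝ≥0∞}
    (h : ∀ n, l2Norm (F n) ≤ a) : l2Norm (fun x => ⨆ n, F n x) ≤ a := by
  refine l2Norm_le_of_tsum_sq_le ?_
  have hsq : ∀ x, (⨆ n, F n x) ^ 2 = ⨆ n, F n x ^ 2 := fun x =>
    (show Monotone fun y : ℝ≥0∞ => y ^ 2 from fun _ _ _ => by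
      dsimp only; gcongr).map_iSup_of_continuousAt (by fun_prop) (by simp)
  have hmono : Monotone fun n x => F n x ^ 2 := fun i j hij x => by
    dsimp only; gcongr; exact hF hij x
  simp only [enorm_eq_self, hsq]
  rw [← lintegral_count, lintegral_iSup (fun n => measurable_from_top) hmono]
  refine iSup_le fun n => ?_
  simpa only [lintegral_count, l2Norm_sq, enorm_eq_self] using pow_le_pow_left' (h n) 2

lemma l2Norm_tsum_le (F : ℕ → ℤ → ℝ≥0∞) :
    l2Norm (fun x => ∑' i, F i x) ≤ ∑' i, l2Norm (F i) := by
  simp_rw [ENNReal.tsum_eq_iSup_nat (f := fun i => F i _)]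
  exact l2Norm_iSup_le_of_monotone (F := fun n x => ∑ i ∈ range n, F i x)
    (fun _ _ hij _ => sum_le_sum_of_subset (range_mono hij))
    fun n => (l2Norm_sum_le _ _).trans (ENNReal.sum_le_tsum _)

lemma l2Norm_sum_mul_shift_le {ι : Type*} (s : Finset ι) (k : ι → ℝ) (a : ι → ℤ) (f : ℤ → ℝ) :
    l2Norm (fun x => ∑ i ∈ s, k i * f (x + a i)) ≤ ENNReal.ofReal (∑ i ∈ s, |k i|) * l2Norm f := by
  calc l2Norm (fun x => ∑ i ∈ s, k i * f (x + a i))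
      ≤ l2Norm (fun x => ∑ i ∈ s, ‖k i‖ₑ * ‖f (x + a i)‖ₑ) :=
        l2Norm_mono fun x => (enorm_sum_le _ _).trans_eq (by simp only [enorm_mul, enorm_eq_self])
    _ ≤ ∑ i ∈ s, l2Norm (fun x => ‖k i‖ₑ * ‖f (x + a i)‖ₑ) := l2Norm_sum_le _ _
    _ = ∑ i ∈ s, ENNReal.ofReal |k i| * l2Norm f := by
        refine sum_congr rfl fun i _ => ?_
        rw [l2Norm_const_mul, l2Norm_comp_add_right fun x => ‖f x‖ₑ, Real.enorm_eq_ofReal_abs]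
        simp only [l2Norm, eLpNorm_enorm]
    _ = ENNReal.ofReal (∑ i ∈ s, |k i|) * l2Norm f := by
        rw [ENNReal.ofReal_sum_of_nonneg fun i _ => abs_nonneg _, sum_mul]

lemma l2Norm_sq_eq_ofReal {f : ℤ → ℝ} (hf : f.support.Finite) :
    l2Norm f ^ 2 = ENNReal.ofReal (∑' x, f x ^ 2) := by
  rw [l2Norm_sq, ENNReal.ofReal_tsum_of_nonneg fun _ => sq_nonneg _]
  · simp only [Real.enorm_eq_ofReal_abs, ← ENNReal.ofReal_pow (abs_nonneg _), sq_abs]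
  · exact summable_of_hasFiniteSupport (hf.subset fun _ hx hfx => hx (by simp [hfx]))

lemma l2Norm_ne_top {f : ℤ → ℝ} (hf : f.support.Finite) : l2Norm f ≠ ⊤ := fun h => by
  simpa [h] using l2Norm_sq_eq_ofReal hf

end L2Norm

/-! ### The one-sided maximal function along a progression -/

/-- The sum of `f` over the first `J` terms after `x` of the progression of step `d` through `x`. -/
noncomputable def progressionSum (d : ℤ) (f : ℤ → ℝ) (J : ℕ) (x : ℤ) : ℝ :=
  ∑ j ∈ range J, f (x + (j + 1) * d)

/-- The one-sided maximal function of the averages of `f` over progressions of step `d`. -/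
noncomputable def progressionMaximal (d : ℤ) (f : ℤ → ℝ) (x : ℤ) : ℝ≥0∞ :=
  ⨆ J : ℕ, ENNReal.ofReal (progressionSum d f J x / J)

/-- The maximum of the averages of `f` over progressions of step `d` and length at most `K`. -/
noncomputable def truncatedMaximal (d : ℤ) (f : ℤ → ℝ) (K : ℕ) (x : ℤ) : ℝ :=
  (range (K + 1)).sup' nonempty_range_add_one fun J => progressionSum d f J x / J

section Maximal

variable {d : ℤ} {f : ℤ → ℝ}

lemma progressionSum_succ (d : ℤ) (f : ℤ → ℝ) (J : ℕ) (x : ℤ) :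
    progressionSum d f (J + 1) x = f (x + d) + progressionSum d f J (x + d) := by
  rw [progressionSum, sum_range_succ', add_comm, progressionSum]
  congr 1
  · simp
  · refine sum_congr rfl fun j _ => congrArg f ?_
    push_cast
    ring

lemma progressionSum_nonneg (hf : ∀ x, 0 ≤ f x) (J : ℕ) (x : ℤ) : 0 ≤ progressionSum d f J x :=
  sum_nonneg fun _ _ => hf _

lemma finite_setOf_exists_progressionSum_ne_zero (hfin : f.support.Finite) (K : ℕ) :
    {x | ∃ J ≤ K, progressionSum d f J x ≠ 0}.Finite := by
  refine ((finite_toSet (range K)).biUnion fun j _ =>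
    hfin.image fun y => y - ((j : ℤ) + 1) * d).subset ?_
  rintro x ⟨J, hJ, hx⟩
  obtain ⟨j, hj, hne⟩ := exists_ne_zero_of_sum_ne_zero hx
  exact Set.mem_biUnion (mem_coe.2 (mem_range.2 ((mem_range.1 hj).trans_le hJ)))
    ⟨x + (j + 1) * d, hne, by ring⟩

-- Hopf's maximal inequality: with `F = max_{J ≤ K} (progressionSum J - l J)`, one has
-- `F x ≤ f (x + d) - l + F (x + d)` wherever `F x > 0`.
lemma mul_card_le_sum_of_lt_progressionSum (K : ℕ) (l : ℝ) (E : Finset ℤ)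
    (hE : ∀ x, x ∈ E ↔ ∃ J ≤ K, l * J < progressionSum d f J x) :
    l * #E ≤ ∑ x ∈ E, f (x + d) := by
  set F : ℤ → ℝ := fun x =>
    (range (K + 1)).sup' nonempty_range_add_one fun J => progressionSum d f J x - l * J
  have le_F : ∀ J ≤ K, ∀ x, progressionSum d f J x - l * J ≤ F x := fun J hJ x =>
    le_sup' (fun J : ℕ => progressionSum d f J x - l * J) (mem_range_succ_iff.2 hJ)
  have exists_F : ∀ x, ∃ J ≤ K, F x = progressionSum d f J x - l * J := fun x => by
    obtain ⟨J, hJ, h⟩ := exists_mem_eq_sup' (s := range (K + 1)) nonempty_range_add_one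
      fun J : ℕ => progressionSum d f J x - l * J
    exact ⟨J, mem_range_succ_iff.1 hJ, h⟩
  have F_nonneg : ∀ x, 0 ≤ F x := fun x => by
    simpa [progressionSum] using le_F 0 K.zero_le x
  have F_eq_zero : ∀ x, x ∉ E → F x = 0 := fun x hx => by
    obtain ⟨J, hJ, h⟩ := exists_F x
    have hle := not_lt.1 fun hlt => hx ((hE x).2 ⟨J, hJ, hlt⟩)
    exact le_antisymm (by linarith) (F_nonneg x)
  have F_step : ∀ x ∈ E, F x ≤ f (x + d) - l + F (x + d) := fun x hx => by
    obtain ⟨J, hJ, hlt⟩ := (hE x).1 hx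
    have F_pos : 0 < F x := (sub_pos.2 hlt).trans_le (le_F J hJ x)
    obtain ⟨_ | I, hI, hFI⟩ := exists_F x
    · simp [progressionSum, F_pos.ne'] at hFI
    · have hnext := le_F I (by omega) (x + d)
      rw [hFI, progressionSum_succ]
      push_cast
      linarith
  have F_summable : Summable F := summable_of_hasFiniteSupport
    (E.finite_toSet.subset fun x hx => by_contra fun h => hx (F_eq_zero x h))
  have sum_F_le : ∑ x ∈ E, F (x + d) ≤ ∑ x ∈ E, F x := by
    rw [← tsum_eq_sum (L := .unconditional ℤ) fun x => F_eq_zero x, ← (Equiv.addRight d).tsum_eq F]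
    exact ((Equiv.addRight d).summable_iff.2 F_summable).sum_le_tsum _ fun x _ => F_nonneg _
  have sum_step := sum_le_sum F_step
  simp only [sum_add_distrib, sum_sub_distrib, sum_const, nsmul_eq_mul] at sum_step
  linarith

lemma mul_card_le_tsum_of_forall_lt_progressionSum (hf : ∀ x, 0 ≤ f x) (hfin : f.support.Finite)
    {l : ℝ} (hl : 0 < l) (s : Finset ℤ) (hs : ∀ x ∈ s, ∃ J : ℕ, l * J < progressionSum d f J x) :
    l * #s ≤ ∑' x, f x := by
  choose! J hJ using hs
  have hK : {x | ∃ I ≤ s.sup J, l * I < progressionSum d f I x}.Finite :=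
    (finite_setOf_exists_progressionSum_ne_zero hfin (s.sup J)).subset
      fun x ⟨I, hI, hlt⟩ => ⟨I, hI, ((by positivity : 0 ≤ l * I).trans_lt hlt).ne'⟩
  have hsub : s ⊆ hK.toFinset := fun x hx => hK.mem_toFinset.2 ⟨J x, le_sup hx, hJ x hx⟩
  have hsummable : Summable fun x => f (x + d) :=
    (Equiv.addRight d).summable_iff.2 (summable_of_hasFiniteSupport hfin)
  calc l * #s ≤ l * #hK.toFinset := by gcongr
    _ ≤ ∑ x ∈ hK.toFinset, f (x + d) :=
        mul_card_le_sum_of_lt_progressionSum (s.sup J) l _ fun x => by simp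
    _ ≤ ∑' x, f (x + d) := hsummable.sum_le_tsum _ fun x _ => hf _
    _ = ∑' x, f x := (Equiv.addRight d).tsum_eq f

lemma progressionSum_weak_type (hf : ∀ x, 0 ≤ f x) (hfin : f.support.Finite) {l : ℝ}
    (hl : 0 < l) :
    {x | ∃ J : ℕ, l * J < progressionSum d f J x}.Finite ∧
      l * ({x | ∃ J : ℕ, l * J < progressionSum d f J x}.ncard : ℝ) ≤ ∑' x, f x := by
  set E := {x | ∃ J : ℕ, l * J < progressionSum d f J x}
  have hcard : ∀ s : Finset ℤ, ↑s ⊆ E → l * #s ≤ ∑' x, f x := fun s hs =>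
    mul_card_le_tsum_of_forall_lt_progressionSum hf hfin hl s hs
  have hE : E.Finite := by
    by_contra hinf
    obtain ⟨n, hn⟩ := exists_nat_gt ((∑' x, f x) / l)
    obtain ⟨s, hs, rfl⟩ := Set.Infinite.exists_subset_card_eq hinf n
    rw [div_lt_iff₀' hl] at hn
    exact hn.not_ge (hcard s hs)
  refine ⟨hE, ?_⟩
  rw [Set.ncard_eq_toFinset_card _ hE]
  exact hcard _ (by simp)

-- Layer-cake: integrate the weak-type hypothesis against `2 dl`.
lemma lintegral_sq_le_of_weak_type {α : Type*} [MeasurableSpace α] {μ ν : Measure α} {g : α → ℝ}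
    (hg : Measurable g) (hg0 : ∀ x, 0 ≤ g x)
    (h : ∀ l : ℝ, 0 < l → ENNReal.ofReal l * μ {x | l < g x} ≤ ν {x | l < g x}) :
    ∫⁻ x, ENNReal.ofReal (g x ^ 2) ∂μ ≤ 2 * ∫⁻ x, ENNReal.ofReal (g x) ∂ν := by
  have hsq := lintegral_rpow_eq_lintegral_meas_lt_mul μ (.of_forall hg0) hg.aemeasurable
    (p := 2) two_pos
  norm_num at hsq
  rw [hsq, lintegral_eq_lintegral_meas_lt ν (.of_forall hg0) hg.aemeasurable]
  refine mul_le_mul_right (setLIntegral_mono' measurableSet_Ioi fun l hl => ?_) 2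
  rw [mul_comm]
  exact h l hl

lemma truncatedMaximal_nonneg (K : ℕ) (x : ℤ) : 0 ≤ truncatedMaximal d f K x :=
  (le_sup'_iff _).2 ⟨0, mem_range_succ_iff.2 K.zero_le, by simp⟩

lemma lt_truncatedMaximal_iff {l : ℝ} (hl : 0 < l) {K : ℕ} {x : ℤ} :
    l < truncatedMaximal d f K x ↔ ∃ J ≤ K, l * J < progressionSum d f J x := by
  simp only [truncatedMaximal, lt_sup'_iff, mem_range_succ_iff]
  refine exists_congr fun J => and_congr_right fun _ => ?_
  rcases J.eq_zero_or_pos with rfl | hJ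
  · simp [progressionSum, hl.le]
  · rw [lt_div_iff₀ (by positivity)]

lemma finite_support_truncatedMaximal (hfin : f.support.Finite) (K : ℕ) :
    (truncatedMaximal d f K).support.Finite := by
  refine (finite_setOf_exists_progressionSum_ne_zero (d := d) hfin K).subset fun x hx => ?_
  obtain ⟨J, hJ, h⟩ := exists_mem_eq_sup' (s := range (K + 1)) nonempty_range_add_one
    fun J : ℕ => progressionSum d f J x / J
  refine ⟨J, mem_range_succ_iff.1 hJ, fun h0 => hx ?_⟩
  rw [truncatedMaximal, h, h0, zero_div]

lemma l2Norm_truncatedMaximal_sq_le (hf : ∀ x, 0 ≤ f x) (hfin : f.support.Finite) (K : ℕ) :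
    l2Norm (truncatedMaximal d f K) ^ 2 ≤ 2 * (l2Norm f * l2Norm (truncatedMaximal d f K)) := by
  set g := truncatedMaximal d f K
  have g_nonneg : ∀ x, 0 ≤ g x := truncatedMaximal_nonneg K
  have weak_type : ∀ l : ℝ, 0 < l → ENNReal.ofReal l * Measure.count {x | l < g x} ≤
      (Measure.count.withDensity fun x => ENNReal.ofReal (f (x + d))) {x | l < g x} := by
    intro l hl
    have hfinite : {x | l < g x}.Finite :=
      (finite_support_truncatedMaximal hfin K).subset fun x hx => (hl.trans hx).ne'
    have hcard := mul_card_le_sum_of_lt_progressionSum K l hfinite.toFinset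
      fun x => by simp only [hfinite.mem_toFinset]; exact lt_truncatedMaximal_iff hl
    rw [withDensity_apply _ hfinite.measurableSet, ← hfinite.coe_toFinset,
      Measure.count_apply_finset, lintegral_finset]
    simp only [Measure.count_singleton, mul_one]
    rw [← ENNReal.ofReal_sum_of_nonneg fun x _ => hf _, ← ENNReal.ofReal_natCast,
      ← ENNReal.ofReal_mul hl.le]
    exact ENNReal.ofReal_le_ofReal hcard
  calc l2Norm g ^ 2 = ∫⁻ x, ENNReal.ofReal (g x ^ 2) ∂Measure.count := by
        simp only [l2Norm_sq, lintegral_count, Real.enorm_eq_ofReal (g_nonneg _),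
          ENNReal.ofReal_pow (g_nonneg _)]
    _ ≤ 2 * ∫⁻ x, ENNReal.ofReal (g x) ∂(Measure.count.withDensity
          fun x => ENNReal.ofReal (f (x + d))) :=
        lintegral_sq_le_of_weak_type measurable_from_top g_nonneg weak_type
    _ = 2 * ∫⁻ x, ENNReal.ofReal (f (x + d)) * ENNReal.ofReal (g x) ∂Measure.count := by
        rw [lintegral_withDensity_eq_lintegral_mul _ measurable_from_top measurable_from_top]
        rfl
    _ ≤ 2 * (l2Norm (fun x => f (x + d)) * l2Norm g) := by
        gcongr
        have := ENNReal.lintegral_mul_le_Lp_mul_Lq (Measure.count : Measure ℤ) .two_two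
          (f := fun x => ‖f (x + d)‖ₑ) (g := fun x => ‖g x‖ₑ)
          measurable_from_top.aemeasurable measurable_from_top.aemeasurable
        simpa [l2Norm, eLpNorm_eq_lintegral_rpow_enorm_toReal, Real.enorm_eq_ofReal, hf,
          g_nonneg] using this
    _ = 2 * (l2Norm f * l2Norm g) := by rw [l2Norm_comp_add_right]

lemma l2Norm_truncatedMaximal_le (hf : ∀ x, 0 ≤ f x) (hfin : f.support.Finite) (K : ℕ) :
    l2Norm (truncatedMaximal d f K) ≤ 2 * l2Norm f := by
  have hsq := l2Norm_truncatedMaximal_sq_le (d := d) hf hfin K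
  rcases eq_or_ne (l2Norm (truncatedMaximal d f K)) 0 with h0 | h0
  · simp [h0]
  · rw [sq, ← mul_assoc] at hsq
    exact (ENNReal.mul_le_mul_iff_left h0
      (l2Norm_ne_top (finite_support_truncatedMaximal hfin K))).1 hsq

lemma l2Norm_progressionMaximal_le (hf : ∀ x, 0 ≤ f x) (hfin : f.support.Finite) :
    l2Norm (progressionMaximal d f) ≤ 2 * l2Norm f := by
  have eq_iSup : progressionMaximal d f =
      fun x => ⨆ K, ENNReal.ofReal (truncatedMaximal d f K x) := by
    funext x
    refine le_antisymm (iSup_mono fun J => ENNReal.ofReal_le_ofReal ?_) (iSup_le fun K => ?_)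
    · exact le_sup' (fun J : ℕ => progressionSum d f J x / J) (self_mem_range_succ J)
    · obtain ⟨J, -, h⟩ := exists_mem_eq_sup' (s := range (K + 1)) nonempty_range_add_one
        fun J : ℕ => progressionSum d f J x / J
      rw [truncatedMaximal, h]
      exact le_iSup (fun J : ℕ => ENNReal.ofReal (progressionSum d f J x / J)) J
  rw [eq_iSup]
  refine l2Norm_iSup_le_of_monotone (fun K L hKL x => ENNReal.ofReal_le_ofReal ?_) fun K => ?_
  · exact sup'_mono _ (range_mono (by omega)) _
  · refine (l2Norm_mono fun x => ?_).trans (l2Norm_truncatedMaximal_le (d := d) hf hfin K)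
    rw [enorm_eq_self, Real.enorm_eq_ofReal (truncatedMaximal_nonneg K x)]

end Maximal

/-! ### Periodic functions and Ramanujan sums -/

section PeriodicSums

lemma sum_range_add_of_periodic {M : Type*} [AddCommGroup M] {h : ℤ → M} {q : ℕ}
    (hh : Function.Periodic h q) (a : ℤ) : ∑ m ∈ range q, h (a + m) = ∑ m ∈ range q, h m := by
  have step : ∀ a : ℤ, ∑ m ∈ range q, h (a + 1 + m) = ∑ m ∈ range q, h (a + m) := fun a => by
    have hsucc := (sum_range_succ (fun m : ℕ => h (a + m)) q).symm.trans
      (sum_range_succ' (fun m : ℕ => h (a + m)) q)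
    simpa [hh a, add_assoc, add_comm (1 : ℤ)] using hsucc.symm
  induction a using Int.induction_on with
  | zero => simp only [zero_add]
  | succ i ih => rw [step, ih]
  | pred i ih => rw [← step, ← ih, sub_add_cancel]

lemma sum_range_mul_of_periodic {R : Type*} [Ring R] {h : ℤ → R} {q : ℕ}
    (hh : Function.Periodic h q) (a : ℤ) (L : ℕ) :
    ∑ m ∈ range (q * L), h (a + m) = L * ∑ m ∈ range q, h m := by
  induction L with
  | zero => simp
  | succ L ih =>
    have hlast := sum_range_add_of_periodic hh (a + (q * L : ℕ))
    rw [Nat.mul_succ, sum_range_add, ih]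
    simp only [Nat.cast_add, ← add_assoc, hlast]
    rw [add_mul, Nat.cast_one, one_mul]

lemma abs_sum_Ico_le_of_periodic {h : ℤ → ℝ} {q : ℕ} (hh : Function.Periodic h q) (hq : 0 < q)
    (h0 : ∑ m ∈ range q, h m = 0) {B : ℝ} (hB : ∀ m, |h m| ≤ B) (a b : ℤ) :
    |∑ m ∈ Ico a b, h m| ≤ q * B := by
  have hB0 : 0 ≤ B := (abs_nonneg _).trans (hB 0)
  set n := (b - a).toNat
  have sum_eq : ∑ m ∈ Ico a b, h m = ∑ m ∈ range n, h (a + m) := sum_map _ _ _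
  rw [sum_eq, ← Nat.div_add_mod n q, sum_range_add, sum_range_mul_of_periodic hh, h0, mul_zero,
    zero_add]
  calc |∑ m ∈ range (n % q), h (a + (q * (n / q) + m : ℕ))|
      ≤ ∑ m ∈ range (n % q), |h (a + (q * (n / q) + m : ℕ))| := abs_sum_le_sum_abs _ _
    _ ≤ ∑ _m ∈ range (n % q), B := sum_le_sum fun m _ => hB _
    _ = (n % q : ℕ) * B := by rw [sum_const, card_range, nsmul_eq_mul]
    _ ≤ q * B := by gcongr; exact (Nat.mod_lt _ hq).le

lemma sum_range_ite_dvd_of_periodic {M : Type*} [AddCommGroup M] {φ : ℤ → M} {q : ℕ} (hq : 0 < q)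
    (hφ : Function.Periodic φ q) (s : ℤ) :
    ∑ m ∈ range q, (if (q : ℤ) ∣ m + s then φ m else 0) = φ (-s) := by
  have periodic_ite : Function.Periodic (fun m => if (q : ℤ) ∣ m + s then φ m else 0) q :=
    fun m => by simp only [hφ m, add_right_comm m (q : ℤ) s, dvd_add_self_right]
  rw [← sum_range_add_of_periodic periodic_ite (-s), sum_eq_single_of_mem 0 (mem_range.2 hq)]
  · simp
  · intro m hm hm0
    have not_dvd : ¬ (q : ℤ) ∣ -s + m + s := by
      rw [neg_add_cancel_comm, Int.natCast_dvd_natCast]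
      exact fun hdvd => hm0 (Nat.eq_zero_of_dvd_of_lt hdvd (mem_range.1 hm))
    rw [if_neg not_dvd]

lemma periodic_of_dvd {α : Type*} {w : ℤ → α} {a b : ℕ} (hw : Function.Periodic w a)
    (h : a ∣ b) : Function.Periodic w b := by
  obtain ⟨k, rfl⟩ := h
  simpa [mul_comm] using hw.int_mul k

lemma sum_range_mul_of_coprime {R : Type*} [CommSemiring R] {a b : ℕ} (ha : 0 < a) (hb : 0 < b)
    (hab : a.Coprime b) {u v : ℤ → R} (hu : Function.Periodic u a) (hv : Function.Periodic v b) :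
    ∑ m ∈ range (a * b), u m * v m = (∑ i ∈ range a, u i) * ∑ j ∈ range b, v j := by
  have map_mod : ∀ {w : ℤ → R} {c : ℕ}, Function.Periodic w c → ∀ m : ℕ, w (m % c : ℕ) = w m :=
    fun {w c} hw m => (hw.nat_mul (m / c) (m % c : ℕ)).symm.trans <| congrArg w <| by
      exact_mod_cast Nat.mod_add_div' m c
  have injOn : Set.InjOn (fun m : ℕ => (m % a, m % b)) (range (a * b)) := fun m hm n hn h => by
    have hmod : m ≡ n [MOD a * b] := (Nat.modEq_and_modEq_iff_modEq_mul hab).1 (Prod.mk.inj h)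
    exact hmod.eq_of_lt_of_lt (mem_range.1 hm) (mem_range.1 hn)
  have mapsTo : Set.MapsTo (fun m : ℕ => (m % a, m % b)) (range (a * b))
      (range a ×ˢ range b : Finset (ℕ × ℕ)) := fun m _ => by
    simp [Nat.mod_lt _ ha, Nat.mod_lt _ hb]
  rw [sum_mul_sum, ← sum_product']
  exact sum_nbij (fun m : ℕ => (m % a, m % b)) (fun m hm => mapsTo hm) injOn
    (surjOn_of_injOn_of_card_le _ mapsTo injOn (by simp)) fun m _ => by
      simp only [map_mod hu, map_mod hv]

end PeriodicSums

/-- The factor of Ramanujan's sum `c_q(n)` at a prime `p` dividing the squarefree number `q`. -/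
noncomputable def localFactor (p : ℕ) (n : ℤ) : ℝ := p * (if (p : ℤ) ∣ n then 1 else 0) - 1

/-- Ramanujan's sum `c_q(n)`, where the squarefree `q` is encoded by its set `W` of primes. -/
noncomputable def ramanujanSum (W : Finset ℕ) (n : ℤ) : ℝ := ∏ p ∈ W, localFactor p n

/-- The squarefree number `q` encoded by the set `W` of its prime factors. -/
def modulus (W : Finset ℕ) : ℕ := ∏ p ∈ W, p

section Ramanujan

variable {W V : Finset ℕ}

lemma abs_localFactor_le {p : ℕ} (hp : p.Prime) (n : ℤ) : |localFactor p n| ≤ p := by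
  have two_le : (2 : ℝ) ≤ p := by exact_mod_cast hp.two_le
  rw [localFactor, abs_le]
  split_ifs <;> constructor <;> linarith

lemma abs_ramanujanSum_le (hW : ∀ p ∈ W, p.Prime) (n : ℤ) : |ramanujanSum W n| ≤ modulus W := by
  rw [ramanujanSum, modulus, abs_prod, Nat.cast_prod]
  exact prod_le_prod (fun _ _ => abs_nonneg _) fun p hp => abs_localFactor_le (hW p hp) n

lemma modulus_pos (hW : ∀ p ∈ W, p.Prime) : 0 < modulus W :=
  prod_pos fun p hp => (hW p hp).pos

lemma localFactor_periodic (p : ℕ) (s : ℤ) :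
    Function.Periodic (fun m => localFactor p (m + s)) p := fun m => by
  simp only [localFactor, add_right_comm m (p : ℤ) s, dvd_add_self_right]

lemma localFactor_neg (p : ℕ) (n : ℤ) : localFactor p (-n) = localFactor p n := by
  simp only [localFactor, dvd_neg]

lemma ramanujanSum_neg (W : Finset ℕ) (n : ℤ) : ramanujanSum W (-n) = ramanujanSum W n := by
  simp only [ramanujanSum, localFactor_neg]

lemma prod_periodic_modulus {h : ℕ → ℤ → ℝ} (hh : ∀ p ∈ W, Function.Periodic (h p) p) :
    Function.Periodic (fun m => ∏ p ∈ W, h p m) (modulus W) := fun m =>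
  prod_congr rfl fun p hp => periodic_of_dvd (hh p hp) (dvd_prod_of_mem _ hp) m

lemma ramanujanSum_periodic (W : Finset ℕ) (s : ℤ) :
    Function.Periodic (fun m => ramanujanSum W (m + s)) (modulus W) :=
  prod_periodic_modulus fun p _ => localFactor_periodic p s

lemma modulus_insert {p : ℕ} (hp : p ∉ W) : modulus (insert p W) = p * modulus W :=
  prod_insert hp

lemma sum_range_modulus_prod (hW : ∀ p ∈ W, p.Prime) {h : ℕ → ℤ → ℝ}
    (hh : ∀ p ∈ W, Function.Periodic (h p) p) :
    ∑ m ∈ range (modulus W), ∏ p ∈ W, h p m = ∏ p ∈ W, ∑ m ∈ range p, h p m := by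
  induction W using Finset.induction_on with
  | empty => simp [modulus]
  | insert a s ha ih =>
    rw [forall_mem_insert] at hW hh
    have coprime : a.Coprime (modulus s) := Nat.Coprime.prod_right fun p hp =>
      (Nat.coprime_primes hW.1 (hW.2 p hp)).2 fun h => ha (h ▸ hp)
    simp only [prod_insert ha, modulus_insert ha, ← ih hW.2 hh.2]
    exact sum_range_mul_of_coprime hW.1.pos (modulus_pos hW.2) coprime hh.1
      (prod_periodic_modulus hh.2)

lemma sum_localFactor {p : ℕ} (hp : 0 < p) (s : ℤ) :
    ∑ m ∈ range p, localFactor p (m + s) = 0 := by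
  have count := sum_range_ite_dvd_of_periodic hp (φ := fun _ => (1 : ℝ)) (fun _ => rfl) s
  simp only [localFactor, sum_sub_distrib, ← mul_sum, count]
  simp

lemma sum_localFactor_mul_localFactor {p : ℕ} (hp : 0 < p) (s t : ℤ) :
    ∑ m ∈ range p, localFactor p (m + s) * localFactor p (m + t) = p * localFactor p (t - s) := by
  have expand : ∀ m : ℕ, localFactor p (m + s) * localFactor p (m + t) =
      p * (if (p : ℤ) ∣ m + s then localFactor p (m + t) else 0) - localFactor p (m + t) := by
    intro m
    conv_lhs => rw [localFactor]
    split_ifs <;> ring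
  simp_rw [expand, sum_sub_distrib, ← mul_sum,
    sum_range_ite_dvd_of_periodic hp (localFactor_periodic p t), sum_localFactor hp t]
  rw [sub_zero, neg_add_eq_sub]

lemma sum_ramanujanSum_mul_ramanujanSum (hW : ∀ p ∈ W, p.Prime) (s t : ℤ) :
    ∑ m ∈ range (modulus W), ramanujanSum W (m + s) * ramanujanSum W (m + t) =
      modulus W * ramanujanSum W (t - s) := by
  simp only [ramanujanSum, ← prod_mul_distrib]
  rw [sum_range_modulus_prod hW (h := fun p m => localFactor p (m + s) * localFactor p (m + t))
      fun p _ => (localFactor_periodic p s).mul (localFactor_periodic p t),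
    prod_congr rfl fun p hp => sum_localFactor_mul_localFactor (hW p hp).pos s t,
    prod_mul_distrib, modulus, Nat.cast_prod]

lemma sum_ramanujanSum_mul_of_ne (hW : ∀ p ∈ W, p.Prime) (hV : ∀ p ∈ V, p.Prime) (hne : W ≠ V)
    (s t : ℤ) :
    ∑ m ∈ range (modulus (W ∪ V)), ramanujanSum W (m + s) * ramanujanSum V (m + t) = 0 := by
  have hU : ∀ p ∈ W ∪ V, p.Prime := fun p hp => (mem_union.1 hp).elim (hW p) (hV p)
  have factor : ∀ m : ℤ, ramanujanSum W (m + s) * ramanujanSum V (m + t) =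
      ∏ p ∈ W ∪ V, (if p ∈ W then localFactor p (m + s) else 1) *
        (if p ∈ V then localFactor p (m + t) else 1) := fun m => by
    rw [prod_mul_distrib, prod_ite_mem, prod_ite_mem, union_inter_cancel_left,
      union_inter_cancel_right, ramanujanSum, ramanujanSum]
  simp_rw [factor]
  rw [sum_range_modulus_prod hU (h := fun p m => (if p ∈ W then localFactor p (m + s) else 1) *
      (if p ∈ V then localFactor p (m + t) else 1)) fun p _ m => ?_]
  · obtain ⟨p, hp⟩ := symmDiff_nonempty.2 hne
    rcases mem_symmDiff.1 hp with ⟨hpW, hpV⟩ | ⟨hpV, hpW⟩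
    · refine prod_eq_zero (mem_union_left _ hpW) ?_
      simpa only [hpW, hpV, if_true, if_false, mul_one] using sum_localFactor (hW p hpW).pos s
    · refine prod_eq_zero (mem_union_right _ hpV) ?_
      simpa only [hpW, hpV, if_true, if_false, one_mul] using sum_localFactor (hV p hpV).pos t
  · have hs := localFactor_periodic p s m
    have ht := localFactor_periodic p t m
    dsimp only at hs ht ⊢
    rw [hs, ht]

lemma modulus_dvd_iff (hW : ∀ p ∈ W, p.Prime) {n : ℤ} :
    (modulus W : ℤ) ∣ n ↔ ∀ p ∈ W, (p : ℤ) ∣ n := by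
  simp only [Int.natCast_dvd]
  exact ⟨fun h p hp => (dvd_prod_of_mem _ hp).trans h,
    fun h => prod_primes_dvd _ (fun p hp => (hW p hp).prime) h⟩

lemma ramanujanSum_eq_sum_powerset (hW : ∀ p ∈ W, p.Prime) (n : ℤ) :
    ramanujanSum W n =
      ∑ D ∈ W.powerset, (-1) ^ #(W \ D) * if (modulus D : ℤ) ∣ n then (modulus D : ℝ) else 0 := by
  simp only [ramanujanSum, localFactor, sub_eq_add_neg, prod_add, prod_const]
  refine sum_congr rfl fun D hD => (mul_comm _ _).trans (congrArg _ ?_)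
  simp only [modulus_dvd_iff fun p hp => hW p (mem_powerset.1 hD hp)]
  split_ifs with h
  · rw [modulus, Nat.cast_prod]
    exact prod_congr rfl fun p hp => by rw [if_pos (h p hp), mul_one]
  · push Not at h
    obtain ⟨p, hp, hpn⟩ := h
    exact prod_eq_zero hp (by rw [if_neg hpn, mul_zero])

end Ramanujan

/-! ### Averages weighted by Ramanujan sums -/

/-- The average of `f (x + n)`, `1 ≤ n ≤ N`, weighted by the Ramanujan sum of the modulus `W`. -/
noncomputable def ramanujanAvg (W : Finset ℕ) (N : ℕ) (f : ℤ → ℝ) (x : ℤ) : ℝ :=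
  (∑ n ∈ range N, ramanujanSum W (n + 1) * f (x + (n + 1))) / N

section RamanujanAvg

variable {W : Finset ℕ} {f : ℤ → ℝ}

lemma finite_support_ramanujanAvg (W : Finset ℕ) (N : ℕ) (hf : f.support.Finite) :
    (ramanujanAvg W N f).support.Finite := by
  refine ((finite_toSet (range N)).biUnion fun j _ =>
    hf.image fun y => y - ((j : ℤ) + 1)).subset fun x hx => ?_
  obtain ⟨j, hj, hne⟩ := exists_ne_zero_of_sum_ne_zero (div_ne_zero_iff.1 hx).1
  exact Set.mem_biUnion hj ⟨x + (j + 1), right_ne_zero_of_mul hne, by ring⟩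

lemma ramanujanAvg_empty (N : ℕ) (f : ℤ → ℝ) (x : ℤ) :
    ramanujanAvg ∅ N f x = progressionSum 1 f N x / N := by
  simp [ramanujanAvg, ramanujanSum, progressionSum]

lemma sum_ite_dvd_eq_progressionSum (d N : ℕ) (g : ℤ → ℝ) (x : ℤ) :
    ∑ n ∈ range N, (if (d : ℤ) ∣ n + 1 then g (x + (n + 1)) else 0) =
      progressionSum d g (N / d) x := by
  induction N with
  | zero => simp [progressionSum]
  | succ N ih =>
    have dvd_iff : (d : ℤ) ∣ N + 1 ↔ d ∣ N + 1 := by norm_cast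
    rw [sum_range_succ, ih, Nat.succ_div]
    split_ifs with hz hn hn
    · have hmul : ((N / d : ℕ) + 1 : ℤ) * d = N + 1 := by
        have := Nat.div_mul_cancel hn
        rw [Nat.succ_div_of_dvd hn] at this
        exact_mod_cast this
      rw [progressionSum, progressionSum, sum_range_succ, hmul]
    · exact absurd (dvd_iff.1 hz) hn
    · exact absurd (dvd_iff.2 hn) hz
    · simp

lemma ramanujanAvg_eq_sum_powerset (hW : ∀ p ∈ W, p.Prime) (N : ℕ) (f : ℤ → ℝ) (x : ℤ) :
    ramanujanAvg W N f x = ∑ D ∈ W.powerset,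
      (-1) ^ #(W \ D) * (modulus D / N * progressionSum (modulus D) f (N / modulus D) x) := by
  simp only [ramanujanAvg, ramanujanSum_eq_sum_powerset hW, sum_mul, sum_div]
  rw [sum_comm]
  refine sum_congr rfl fun D _ => ?_
  rw [← sum_ite_dvd_eq_progressionSum, mul_sum, mul_sum]
  refine sum_congr rfl fun n _ => ?_
  split_ifs <;> ring

lemma div_mul_abs_progressionSum_le (d N : ℕ) (f : ℤ → ℝ) (x : ℤ) :
    (d / N : ℝ) * |progressionSum d f (N / d) x| ≤
      progressionSum d (fun y => |f y|) (N / d) x / (N / d : ℕ) := by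
  have habs : |progressionSum d f (N / d) x| ≤ progressionSum d (fun y => |f y|) (N / d) x :=
    abs_sum_le_sum_abs _ _
  rcases (N / d).eq_zero_or_pos with h0 | hpos
  · simp [h0, progressionSum]
  have hN : 0 < N := Nat.pos_of_ne_zero fun hN => by simp [hN] at hpos
  have hmul : (d * (N / d : ℕ) : ℝ) ≤ N := by exact_mod_cast Nat.mul_div_le N d
  have hdiv : (d / N : ℝ) ≤ 1 / (N / d : ℕ) := by
    rwa [div_le_div_iff₀ (by exact_mod_cast hN) (by exact_mod_cast hpos), one_mul]
  calc (d / N : ℝ) * |progressionSum d f (N / d) x|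
      ≤ 1 / (N / d : ℕ) * progressionSum d (fun y => |f y|) (N / d) x := by gcongr
    _ = _ := by rw [one_div_mul_eq_div]

lemma enorm_ramanujanAvg_le (hW : ∀ p ∈ W, p.Prime) (N : ℕ) (f : ℤ → ℝ) (x : ℤ) :
    ‖ramanujanAvg W N f x‖ₑ ≤
      ∑ D ∈ W.powerset, progressionMaximal (modulus D) (fun y => |f y|) x := by
  rw [ramanujanAvg_eq_sum_powerset hW]
  refine (enorm_sum_le _ _).trans (sum_le_sum fun D _ => ?_)
  have habs : |(-1) ^ #(W \ D) *
        (modulus D / N * progressionSum (modulus D) f (N / modulus D) x)| =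
      (modulus D / N : ℝ) * |progressionSum (modulus D) f (N / modulus D) x| := by
    rw [abs_mul, abs_neg_one_pow, one_mul, abs_mul, abs_of_nonneg (by positivity)]
  rw [Real.enorm_eq_ofReal_abs, habs]
  exact (ENNReal.ofReal_le_ofReal (div_mul_abs_progressionSum_le _ _ _ _)).trans
    (le_iSup (fun J : ℕ => ENNReal.ofReal (progressionSum (modulus D) (fun y => |f y|) J x / J)) _)

lemma l2Norm_iSup_ramanujanAvg_le (hW : ∀ p ∈ W, p.Prime) (hf : f.support.Finite) :
    l2Norm (fun x => ⨆ N : ℕ, ‖ramanujanAvg W N f x‖ₑ) ≤ 2 ^ (#W + 1) * l2Norm f := by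
  have maximal_le : ∀ D ∈ W.powerset,
      l2Norm (progressionMaximal (modulus D) fun y => |f y|) ≤ 2 * l2Norm f := fun D _ => by
    refine (l2Norm_progressionMaximal_le (fun _ => abs_nonneg _)
      (hf.subset fun x hx => abs_ne_zero.1 hx)).trans_eq ?_
    exact congrArg (2 * ·)
      (le_antisymm (l2Norm_mono fun x => by simp) (l2Norm_mono fun x => by simp))
  calc l2Norm (fun x => ⨆ N : ℕ, ‖ramanujanAvg W N f x‖ₑ)
      ≤ l2Norm (fun x => ∑ D ∈ W.powerset, progressionMaximal (modulus D) (fun y => |f y|) x) :=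
        l2Norm_mono fun x => iSup_le fun N => enorm_ramanujanAvg_le hW N f x
    _ ≤ ∑ D ∈ W.powerset, l2Norm (progressionMaximal (modulus D) fun y => |f y|) :=
        l2Norm_sum_le _ _
    _ ≤ ∑ _D ∈ W.powerset, 2 * l2Norm f := sum_le_sum maximal_le
    _ = 2 ^ (#W + 1) * l2Norm f := by
        rw [sum_const, card_powerset, nsmul_eq_mul]
        push_cast
        ring

end RamanujanAvg

/-! ### Almost orthogonality of the Ramanujan averages -/

open scoped InnerProductSpace

lemma norm_sum_sq_le_of_almost_orthogonal {ι E : Type*} [NormedAddCommGroup E]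
    [InnerProductSpace ℝ E] {s : Finset ι} {w : ι → E} {c : ι → ℝ} {a b : ℝ} (hb : 0 ≤ b)
    (hc : ∀ i ∈ s, 0 ≤ c i) (hdiag : ∀ i ∈ s, ‖w i‖ ^ 2 ≤ a * c i ^ 2)
    (hoff : ∀ i ∈ s, ∀ j ∈ s, i ≠ j → ⟪w i, w j⟫_ℝ ≤ b * (c i * c j)) :
    ‖∑ i ∈ s, w i‖ ^ 2 ≤ (a + b * #s) * ∑ i ∈ s, c i ^ 2 := by
  classical
  have inner_le : ∀ i ∈ s, ∀ j ∈ s,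
      ⟪w i, w j⟫_ℝ ≤ (if i = j then a * c i ^ 2 else 0) + b * (c i * c j) := by
    intro i hi j hj
    have h0 : 0 ≤ b * (c i * c j) := mul_nonneg hb (mul_nonneg (hc i hi) (hc j hj))
    split_ifs with hij
    · subst hij
      rw [real_inner_self_eq_norm_sq]
      linarith [hdiag i hi]
    · linarith [hoff i hi j hj hij]
  calc ‖∑ i ∈ s, w i‖ ^ 2
      = ∑ i ∈ s, ∑ j ∈ s, ⟪w i, w j⟫_ℝ := by
        rw [← real_inner_self_eq_norm_sq, sum_inner]
        simp only [inner_sum]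
    _ ≤ ∑ i ∈ s, ∑ j ∈ s, ((if i = j then a * c i ^ 2 else 0) + b * (c i * c j)) :=
        sum_le_sum fun i hi => sum_le_sum (inner_le i hi)
    _ = a * ∑ i ∈ s, c i ^ 2 + b * (∑ i ∈ s, c i) ^ 2 := by
        rw [sq (∑ i ∈ s, c i), sum_mul_sum]
        simp +contextual only [sum_add_distrib, sum_ite_eq, if_true, mul_sum]
    _ ≤ a * ∑ i ∈ s, c i ^ 2 + b * (#s * ∑ i ∈ s, c i ^ 2) := by
        gcongr
        exact sq_sum_le_card_mul_sum_sq
    _ = (a + b * #s) * ∑ i ∈ s, c i ^ 2 := by ring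

lemma sum_norm_sq_le_of_almost_orthogonal {ι E : Type*} [NormedAddCommGroup E]
    [InnerProductSpace ℝ E] {s : Finset ι} {h w : ι → E} {v : E} {a b : ℝ} (ha : 0 ≤ a)
    (hb : 0 ≤ b) (hhw : ∀ i ∈ s, ‖h i‖ ^ 2 = ⟪w i, v⟫_ℝ)
    (hdiag : ∀ i ∈ s, ‖w i‖ ^ 2 ≤ a * ‖h i‖ ^ 2)
    (hoff : ∀ i ∈ s, ∀ j ∈ s, i ≠ j → ⟪w i, w j⟫_ℝ ≤ b * (‖h i‖ * ‖h j‖)) :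
    ∑ i ∈ s, ‖h i‖ ^ 2 ≤ (a + b * #s) * ‖v‖ ^ 2 := by
  set S := ∑ i ∈ s, ‖h i‖ ^ 2
  have S_le : S ≤ ‖∑ i ∈ s, w i‖ * ‖v‖ := by
    rw [show S = ⟪∑ i ∈ s, w i, v⟫_ℝ by rw [sum_inner]; exact sum_congr rfl hhw]
    exact real_inner_le_norm _ _
  have S_nonneg : 0 ≤ S := sum_nonneg fun _ _ => by positivity
  rcases S_nonneg.eq_or_lt with h0 | hpos
  · rw [← h0]
    positivity
  refine le_of_mul_le_mul_right ?_ hpos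
  calc S * S ≤ (‖∑ i ∈ s, w i‖ * ‖v‖) * (‖∑ i ∈ s, w i‖ * ‖v‖) := by gcongr
    _ = ‖∑ i ∈ s, w i‖ ^ 2 * ‖v‖ ^ 2 := by ring
    _ ≤ (a + b * #s) * S * ‖v‖ ^ 2 := by
        gcongr
        exact norm_sum_sq_le_of_almost_orthogonal hb (fun _ _ => norm_nonneg _) hdiag hoff
    _ = (a + b * #s) * ‖v‖ ^ 2 * S := by ring

lemma sum_Ico_sum_Ico_eq_sum_diagonals {M : Type*} [AddCommMonoid M] (F : ℤ → ℤ → M)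
    (a b c d : ℤ) :
    ∑ m ∈ Ico a b, ∑ n ∈ Ico c d, F m n =
      ∑ j ∈ Ioo (c - b) (d - a), ∑ m ∈ Ico (max a (c - j)) (min b (d - j)), F m (m + j) := by
  have row : ∀ m ∈ Ico a b, ∑ n ∈ Ico c d, F m n =
      ∑ j ∈ Ioo (c - b) (d - a) with c ≤ m + j ∧ m + j < d, F m (m + j) := fun m hm => by
    rw [mem_Ico] at hm
    refine sum_nbij' (fun n => n - m) (fun j => m + j) ?_ ?_ ?_ ?_ ?_ <;>
      simp only [mem_Ico, mem_filter, mem_Ioo, add_sub_cancel, add_sub_cancel_left] <;> grind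
  rw [sum_congr rfl row]
  refine sum_comm' fun m j => ?_
  simp only [mem_Ico, mem_filter, mem_Ioo]
  omega

lemma abs_sum_sum_mul_mul_sub_le (M N : ℕ) {a b A : ℤ → ℝ} {B E : ℝ}
    (hB : ∀ j α β : ℤ, |∑ m ∈ Ico α β, a m * b (m + j)| ≤ B) (hA : ∀ j, |A j| ≤ E) :
    |∑ m ∈ Ico (1 : ℤ) (M + 1), ∑ n ∈ Ico (1 : ℤ) (N + 1), a m * b n * A (n - m)| ≤
      (M + N) * (B * E) := by
  have hB0 : 0 ≤ B := (abs_nonneg _).trans (hB 0 0 0)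
  have hE0 : 0 ≤ E := (abs_nonneg _).trans (hA 0)
  rw [sum_Ico_sum_Ico_eq_sum_diagonals]
  simp only [add_sub_cancel_left, ← sum_mul]
  refine (abs_sum_le_sum_abs _ _).trans <| (sum_le_card_nsmul _ _ (B * E) fun j _ => ?_).trans ?_
  · rw [abs_mul]
    exact mul_le_mul (hB _ _ _) (hA j) (abs_nonneg _) hB0
  · rw [Int.card_Ioo, nsmul_eq_mul]
    gcongr
    have card_le : ((N + 1 - 1 : ℤ) - (1 - (M + 1)) - 1).toNat ≤ M + N := by omega
    exact_mod_cast card_le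

lemma sum_Ico_one_eq_sum_range {M : Type*} [AddCommMonoid M] (h : ℤ → M) (N : ℕ) :
    ∑ m ∈ Ico (1 : ℤ) (N + 1), h m = ∑ n ∈ range N, h (n + 1) := by
  have sum_eq : ∑ m ∈ Ico (1 : ℤ) (N + 1), h m = ∑ m ∈ range (N + 1 - 1 : ℤ).toNat, h (1 + m) :=
    sum_map _ _ _
  simpa [add_comm (1 : ℤ)] using sum_eq

section Ramanujan

variable {W V : Finset ℕ}

lemma sum_abs_ramanujanSum_le (hW : ∀ p ∈ W, p.Prime) (N : ℕ) :
    ∑ m ∈ Ico (1 : ℤ) (N + 1), |ramanujanSum W m| ≤ 2 ^ #W * N := by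
  rw [sum_Ico_one_eq_sum_range]
  calc ∑ n ∈ range N, |ramanujanSum W (n + 1)|
      ≤ ∑ n ∈ range N, ∑ D ∈ W.powerset,
          (if (modulus D : ℤ) ∣ n + 1 then (modulus D : ℝ) else 0) := by
        refine sum_le_sum fun n _ => ?_
        rw [ramanujanSum_eq_sum_powerset hW]
        refine (abs_sum_le_sum_abs _ _).trans (sum_le_sum fun D _ => le_of_eq ?_)
        rw [abs_mul, abs_neg_one_pow, one_mul, abs_of_nonneg]
        positivity
    _ = ∑ D ∈ W.powerset, (modulus D * (N / modulus D : ℕ) : ℝ) := by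
        rw [sum_comm]
        refine sum_congr rfl fun D _ => ?_
        rw [sum_ite_dvd_eq_progressionSum (modulus D) N (fun _ => (modulus D : ℝ)) 0]
        simp [progressionSum, mul_comm]
    _ ≤ ∑ _D ∈ W.powerset, (N : ℝ) :=
        sum_le_sum fun D _ => by exact_mod_cast Nat.mul_div_le N (modulus D)
    _ = 2 ^ #W * N := by simp

lemma modulus_union_le (hW : ∀ p ∈ W, p.Prime) : modulus (W ∪ V) ≤ modulus W * modulus V := by
  have inter_pos : 0 < modulus (W ∩ V) := modulus_pos fun p hp => hW p (mem_inter.1 hp).1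
  exact (Nat.le_mul_of_pos_right _ inter_pos).trans_eq prod_union_inter

lemma abs_sum_Ico_ramanujanSum_mul_le (hW : ∀ p ∈ W, p.Prime) (hV : ∀ p ∈ V, p.Prime)
    (hne : W ≠ V) (j α β : ℤ) :
    |∑ m ∈ Ico α β, ramanujanSum W m * ramanujanSum V (m + j)| ≤
      (modulus W * modulus V : ℝ) ^ 2 := by
  have hU : ∀ p ∈ W ∪ V, p.Prime := fun p hp => (mem_union.1 hp).elim (hW p) (hV p)
  have periodic : Function.Periodic (fun m => ramanujanSum W m * ramanujanSum V (m + j))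
      (modulus (W ∪ V)) := by
    have hWper := ramanujanSum_periodic W 0
    simp only [add_zero] at hWper
    exact (periodic_of_dvd hWper (prod_dvd_prod_of_subset _ _ _ subset_union_left)).mul
      (periodic_of_dvd (ramanujanSum_periodic V j)
        (prod_dvd_prod_of_subset _ _ _ subset_union_right))
  have orthogonal := sum_ramanujanSum_mul_of_ne hW hV hne 0 j
  simp only [add_zero] at orthogonal
  calc _ ≤ (modulus (W ∪ V) : ℝ) * (modulus W * modulus V) :=
        abs_sum_Ico_le_of_periodic periodic (modulus_pos hU) orthogonal (fun m => by
          rw [abs_mul]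
          gcongr
          exacts [abs_ramanujanSum_le hW m, abs_ramanujanSum_le hV _]) α β
    _ ≤ (modulus W * modulus V : ℝ) * (modulus W * modulus V) := by
        gcongr
        exact_mod_cast modulus_union_le hW
    _ = _ := (sq _).symm

end Ramanujan

section Orbit

variable {E : Type*} [NormedAddCommGroup E] [InnerProductSpace ℝ E]

/-- The average of `U n v`, `1 ≤ n ≤ N`, weighted by the Ramanujan sum of the modulus `W`;
`ramanujanAvg` is the case where `U` is the shift of sequences. -/
noncomputable def ramanujanOrbitAvg (W : Finset ℕ) (N : ℕ) (U : ℤ → E →ₗᵢ[ℝ] E) (v : E) : E :=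
  ∑ m ∈ Ico (1 : ℤ) (N + 1), (ramanujanSum W m / N) • U m v

variable {U : ℤ → E →ₗᵢ[ℝ] E} {W V : Finset ℕ}

lemma norm_ramanujanOrbitAvg_le (hW : ∀ p ∈ W, p.Prime) (N : ℕ) (U : ℤ → E →ₗᵢ[ℝ] E) (v : E) :
    ‖ramanujanOrbitAvg W N U v‖ ≤ 2 ^ #W * ‖v‖ := by
  calc ‖ramanujanOrbitAvg W N U v‖
      ≤ ∑ m ∈ Ico (1 : ℤ) (N + 1), |ramanujanSum W m| / N * ‖v‖ := by
        refine (norm_sum_le _ _).trans_eq (sum_congr rfl fun m _ => ?_)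
        rw [norm_smul, LinearIsometry.norm_map, Real.norm_eq_abs, abs_div, Nat.abs_cast]
    _ = (∑ m ∈ Ico (1 : ℤ) (N + 1), |ramanujanSum W m|) / N * ‖v‖ := by
        rw [← sum_mul, sum_div]
    _ ≤ 2 ^ #W * ‖v‖ := by
        gcongr
        exact div_le_of_le_mul₀ N.cast_nonneg (by positivity) (sum_abs_ramanujanSum_le hW N)

lemma inner_action_action (hU : ∀ a b x, U (a + b) x = U a (U b x)) (a b : ℤ) (x y : E) :
    ⟪U a x, U b y⟫_ℝ = ⟪U (a - b) x, y⟫_ℝ := by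
  rw [← add_sub_cancel b a, hU, LinearIsometry.inner_map_map, add_sub_cancel]

lemma inner_ramanujanOrbitAvg (hU : ∀ a b x, U (a + b) x = U a (U b x)) (W : Finset ℕ) (N : ℕ)
    (x y : E) :
    ⟪ramanujanOrbitAvg W N U x, y⟫_ℝ = ⟪ramanujanOrbitAvg W N (fun m => U (-m)) y, x⟫_ℝ := by
  simp only [ramanujanOrbitAvg, sum_inner, real_inner_smul_left]
  have action_zero : ∀ z, U 0 z = z := fun z => (U 0).injective (by rw [← hU, add_zero])
  refine sum_congr rfl fun m _ => ?_
  have adjoint := inner_action_action hU 0 (-m) x y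
  rw [action_zero, zero_sub, neg_neg] at adjoint
  rw [← adjoint, real_inner_comm]

lemma inner_ramanujanOrbitAvg_ramanujanOrbitAvg_le (hU : ∀ a b x, U (a + b) x = U a (U b x))
    (hW : ∀ p ∈ W, p.Prime) (hV : ∀ p ∈ V, p.Prime) (hne : W ≠ V) {M N : ℕ} (hM : 0 < M)
    (hN : 0 < N) (x y : E) :
    ⟪ramanujanOrbitAvg W M (fun m => U (-m)) x, ramanujanOrbitAvg V N (fun m => U (-m)) y⟫_ℝ ≤
      ((M : ℝ)⁻¹ + (N : ℝ)⁻¹) * (modulus W * modulus V) ^ 2 * (‖x‖ * ‖y‖) := by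
  have hM' : (0 : ℝ) < M := by exact_mod_cast hM
  have hN' : (0 : ℝ) < N := by exact_mod_cast hN
  have correlation : ∀ j α β : ℤ,
      |∑ m ∈ Ico α β, ramanujanSum W m / M * (ramanujanSum V (m + j) / N)| ≤
        (modulus W * modulus V) ^ 2 / (M * N) := fun j α β => by
    simp only [div_mul_div_comm]
    rw [← sum_div, abs_div, abs_of_pos (mul_pos hM' hN')]
    gcongr
    exact abs_sum_Ico_ramanujanSum_mul_le hW hV hne j α β
  have matrix_coeff : ∀ j, |⟪U j x, y⟫_ℝ| ≤ ‖x‖ * ‖y‖ := fun j =>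
    (abs_real_inner_le_norm _ _).trans_eq (by rw [LinearIsometry.norm_map])
  calc _ = ∑ m ∈ Ico (1 : ℤ) (M + 1), ∑ n ∈ Ico (1 : ℤ) (N + 1),
        ramanujanSum W m / M * (ramanujanSum V n / N) * ⟪U (n - m) x, y⟫_ℝ := by
        simp only [ramanujanOrbitAvg, sum_inner, real_inner_smul_left]
        simp only [inner_sum, real_inner_smul_right, inner_action_action hU, neg_sub_neg,
          mul_sum, mul_assoc]
    _ ≤ (M + N) * ((modulus W * modulus V) ^ 2 / (M * N) * (‖x‖ * ‖y‖)) :=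
        (le_abs_self _).trans <| abs_sum_sum_mul_mul_sub_le M N
          (b := fun m => ramanujanSum V m / N) (A := fun j => ⟪U j x, y⟫_ℝ) correlation matrix_coeff
    _ = _ := by
        field_simp
        ring

lemma sum_norm_sq_ramanujanOrbitAvg_le (hU : ∀ a b x, U (a + b) x = U a (U b x))
    {B : Finset (Finset ℕ)} (hB : ∀ W ∈ B, ∀ p ∈ W, p.Prime) {N : Finset ℕ → ℕ}
    (hN : ∀ W ∈ B, 0 < N W) {D b : ℝ} (hD : ∀ W ∈ B, (2 : ℝ) ^ #W ≤ D) (hb0 : 0 ≤ b)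
    (hb : ∀ W ∈ B, ∀ V ∈ B, ((N W : ℝ)⁻¹ + (N V : ℝ)⁻¹) * (modulus W * modulus V) ^ 2 ≤ b)
    (v : E) :
    ∑ W ∈ B, ‖ramanujanOrbitAvg W (N W) U v‖ ^ 2 ≤ (D ^ 2 + b * #B) * ‖v‖ ^ 2 := by
  refine sum_norm_sq_le_of_almost_orthogonal (sq_nonneg D) hb0
    (w := fun W => ramanujanOrbitAvg W (N W) (fun m => U (-m)) (ramanujanOrbitAvg W (N W) U v))
    (fun W _ => ?_) (fun W hW => ?_) (fun W hW V hV hne => ?_)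
  · rw [← inner_ramanujanOrbitAvg hU, real_inner_self_eq_norm_sq]
  · rw [← mul_pow]
    gcongr
    exact (norm_ramanujanOrbitAvg_le (hB W hW) _ _ _).trans (by gcongr; exact hD W hW)
  · exact (inner_ramanujanOrbitAvg_ramanujanOrbitAvg_le hU (hB W hW) (hB V hV) hne (hN W hW)
      (hN V hV) _ _).trans (by gcongr; exact hb W hW V hV)

end Orbit

lemma lp_norm_sq (f : lp (fun _ : ℤ => ℝ) 2) : ‖f‖ ^ 2 = ∑' x, f x ^ 2 := by
  simpa using lp.norm_rpow_eq_tsum (p := 2) (by norm_num) f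

/-- Translation by `a` as an isometry of `ℓ²(ℤ)`. -/
noncomputable def lpShift (a : ℤ) : lp (fun _ : ℤ => ℝ) 2 →ₗᵢ[ℝ] lp (fun _ : ℤ => ℝ) 2 where
  toFun f := ⟨fun x => f (x + a), memℓp_gen <|
    (Equiv.addRight a).summable_iff.2 ((lp.memℓp f).summable (by norm_num))⟩
  map_add' _ _ := rfl
  map_smul' _ _ := rfl
  norm_map' f := (pow_left_inj₀ (norm_nonneg _) (norm_nonneg _) two_ne_zero).1 <| by
    rw [lp_norm_sq, lp_norm_sq]
    exact (Equiv.addRight a).tsum_eq fun y => f y ^ 2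

lemma ramanujanOrbitAvg_lpShift_apply (W : Finset ℕ) (N : ℕ) (f : lp (fun _ : ℤ => ℝ) 2) (x : ℤ) :
    ramanujanOrbitAvg W N lpShift f x = ramanujanAvg W N f x := by
  rw [ramanujanOrbitAvg, sum_Ico_one_eq_sum_range, lp.coeFn_sum, Finset.sum_apply, ramanujanAvg,
    sum_div]
  exact sum_congr rfl fun n _ => div_mul_eq_mul_div _ _ _

lemma sum_l2Norm_sq_ramanujanAvg_le {B : Finset (Finset ℕ)} (hB : ∀ W ∈ B, ∀ p ∈ W, p.Prime)
    {N : Finset ℕ → ℕ} (hN : ∀ W ∈ B, 0 < N W) {D b : ℝ} (hD : ∀ W ∈ B, (2 : ℝ) ^ #W ≤ D)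
    (hb0 : 0 ≤ b)
    (hb : ∀ W ∈ B, ∀ V ∈ B, ((N W : ℝ)⁻¹ + (N V : ℝ)⁻¹) * (modulus W * modulus V) ^ 2 ≤ b)
    {f : ℤ → ℝ} (hf : f.support.Finite) :
    ∑ W ∈ B, l2Norm (ramanujanAvg W (N W) f) ^ 2 ≤
      ENNReal.ofReal (D ^ 2 + b * #B) * l2Norm f ^ 2 := by
  have mem : Memℓp (E := fun _ : ℤ => ℝ) f 2 := memℓp_gen <|
    summable_of_hasFiniteSupport <| hf.subset fun x hx hx0 => hx (by simp [hx0])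
  have bessel := sum_norm_sq_ramanujanOrbitAvg_le (U := lpShift)
    (fun a b g => by ext x; exact congrArg g (by ring)) hB hN hD hb0 hb ⟨f, mem⟩
  simp only [lp_norm_sq, ramanujanOrbitAvg_lpShift_apply] at bessel
  rw [sum_congr rfl fun W _ => l2Norm_sq_eq_ofReal (finite_support_ramanujanAvg W (N W) hf),
    l2Norm_sq_eq_ofReal hf, ← ENNReal.ofReal_mul (by positivity),
    ← ENNReal.ofReal_sum_of_nonneg fun W _ => tsum_nonneg fun x => sq_nonneg _]
  exact ENNReal.ofReal_le_ofReal bessel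

/-! ### Maximal averages over a dyadic block of moduli -/

lemma sum_range_add_sub_sum_range {M : Type*} [AddCommGroup M] (h : ℤ → M) (N k : ℕ) :
    ∑ n ∈ range N, h (n + k) - ∑ n ∈ range N, h n =
      ∑ i ∈ range k, h (N + i) - ∑ i ∈ range k, h i := by
  have hNk := sum_range_add (fun n : ℕ => h n) N k
  rw [add_comm, sum_range_add] at hNk
  push_cast at hNk
  simp only [add_comm _ (k : ℤ)]
  rw [sub_eq_sub_iff_add_eq_add, add_comm, hNk, add_comm]

section Smoothing

variable {W : Finset ℕ} {M : ℕ}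

lemma sum_range_ramanujanSum_mul_ramanujanSum (hW : ∀ p ∈ W, p.Prime) (hM : modulus W ∣ M)
    (n : ℤ) :
    ∑ m ∈ range M, ramanujanSum W (m + 1) * ramanujanSum W (n - m) =
      M * ramanujanSum W (n + 1) := by
  obtain ⟨L, rfl⟩ := hM
  have periodic := sum_range_mul_of_periodic
    ((ramanujanSum_periodic W 1).mul (ramanujanSum_periodic W (-n))) 0 L
  have reproducing := sum_ramanujanSum_mul_ramanujanSum hW 1 (-n)
  simp only [Pi.mul_apply, zero_add] at periodic
  rw [show -n - 1 = -(n + 1) by ring, ramanujanSum_neg] at reproducing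
  rw [reproducing] at periodic
  have reflect : ∀ m : ℕ, ramanujanSum W (n - m) = ramanujanSum W (m + -n) := fun m => by
    rw [← ramanujanSum_neg]
    ring_nf
  simp only [reflect, periodic]
  push_cast
  ring

/- Both averages are brought to the form `∑ m, c(m + 1) ∑ n, h m n`, the second one by the
reproducing identity; the inner sums then run over two intervals differing by a shift. -/
lemma ramanujanAvg_ramanujanAvg_sub (hW : ∀ p ∈ W, p.Prime) (hM : modulus W ∣ M) (hM0 : 0 < M)
    (N : ℕ) (f : ℤ → ℝ) (x : ℤ) :
    ramanujanAvg W N (ramanujanAvg W M f) x - ramanujanAvg W N f x =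
      ∑ z ∈ (range M).sigma fun m => range (m + 1),
        (ramanujanSum W (z.1 + 1) * ramanujanSum W (N + z.2 - z.1) / (N * M)) *
          f (x + (N + z.2 + 1)) -
      ∑ z ∈ (range M).sigma fun m => range (m + 1),
        (ramanujanSum W (z.1 + 1) * ramanujanSum W (z.2 - z.1) / (N * M)) *
          f (x + (z.2 + 1)) := by
  have hM' : (M : ℝ) ≠ 0 := by exact_mod_cast hM0.ne'
  have iterated : ramanujanAvg W N (ramanujanAvg W M f) x =
      (∑ m ∈ range M, ramanujanSum W (m + 1) * ∑ n ∈ range N,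
        ramanujanSum W (n + (m + 1 : ℕ) - m) * f (x + (n + (m + 1 : ℕ) + 1))) / (N * M) := by
    simp only [ramanujanAvg, mul_div_assoc', ← sum_div, mul_sum, div_div]
    rw [sum_comm, mul_comm (M : ℝ)]
    congr! 3 with m _ n _
    push_cast
    ring_nf
  have single : ramanujanAvg W N f x =
      (∑ m ∈ range M, ramanujanSum W (m + 1) * ∑ n ∈ range N,
        ramanujanSum W (n - m) * f (x + (n + 1))) / (N * M) := by
    simp only [mul_sum, ← mul_assoc]
    rw [sum_comm]
    simp only [← sum_mul, sum_range_ramanujanSum_mul_ramanujanSum hW hM]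
    simp only [mul_assoc, ← mul_sum]
    rw [mul_comm (N : ℝ), mul_div_mul_left _ _ hM', ramanujanAvg]
  rw [iterated, single, ← sub_div, ← sum_sub_distrib, ← sum_sub_distrib, sum_sigma, sum_div]
  refine sum_congr rfl fun m _ => ?_
  rw [← mul_sub, sum_range_add_sub_sum_range
    (fun j => ramanujanSum W (j - m) * f (x + (j + 1))) N (m + 1), ← sum_sub_distrib, mul_sum,
    sum_div]
  refine sum_congr rfl fun i _ => ?_
  ring

lemma sum_sigma_abs_ramanujanSum_mul_le (hW : ∀ p ∈ W, p.Prime) (N M : ℕ) (a : ℕ → ℕ → ℤ) :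
    ∑ z ∈ (range M).sigma fun m => range (m + 1),
      |ramanujanSum W (z.1 + 1) * ramanujanSum W (a z.1 z.2) / (N * M)| ≤
      (modulus W : ℝ) ^ 2 * M / N := by
  have term_le : ∀ m n : ℤ, |ramanujanSum W m * ramanujanSum W n / (N * M)| ≤
      (modulus W : ℝ) ^ 2 / (N * M) := fun m n => by
    rw [abs_div, abs_mul, sq, abs_of_nonneg (by positivity : (0 : ℝ) ≤ N * M)]
    gcongr <;> exact abs_ramanujanSum_le hW _
  have card_le : #((range M).sigma fun m => range (m + 1)) ≤ M * M := by
    rw [card_sigma]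
    refine (sum_le_card_nsmul _ _ M fun m hm => ?_).trans_eq (by simp)
    simpa [Nat.succ_le_iff] using hm
  calc _ ≤ #((range M).sigma fun m => range (m + 1)) • ((modulus W : ℝ) ^ 2 / (N * M)) :=
        sum_le_card_nsmul _ _ _ fun z _ => term_le _ _
    _ ≤ (M * M : ℝ) * ((modulus W : ℝ) ^ 2 / (N * M)) := by
        rw [nsmul_eq_mul]
        gcongr
        exact_mod_cast card_le
    _ = (modulus W : ℝ) ^ 2 * M / N := by
        rcases M.eq_zero_or_pos with rfl | hM
        · simp
        · field_simp

lemma l2Norm_ramanujanAvg_ramanujanAvg_sub_le (hW : ∀ p ∈ W, p.Prime) (hM : modulus W ∣ M)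
    (hM0 : 0 < M) (N : ℕ) (f : ℤ → ℝ) :
    l2Norm (fun x => ramanujanAvg W N (ramanujanAvg W M f) x - ramanujanAvg W N f x) ≤
      ENNReal.ofReal (2 * (modulus W ^ 2 * M / N)) * l2Norm f := by
  simp only [ramanujanAvg_ramanujanAvg_sub hW hM hM0]
  have kernel_le := sum_sigma_abs_ramanujanSum_mul_le hW N M
  calc _ ≤ ENNReal.ofReal (modulus W ^ 2 * M / N) * l2Norm f +
        ENNReal.ofReal (modulus W ^ 2 * M / N) * l2Norm f := by
        refine (l2Norm_sub_le _ _).trans (add_le_add ?_ ?_)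
        · refine (l2Norm_sum_mul_shift_le _ _ _ f).trans ?_
          gcongr
          exact kernel_le fun m i => N + i - m
        · refine (l2Norm_sum_mul_shift_le _ _ _ f).trans ?_
          gcongr
          exact kernel_le fun m i => i - m
    _ = _ := by rw [← two_mul, ENNReal.ofReal_mul zero_le_two, ENNReal.ofReal_ofNat, mul_assoc]

lemma l2Norm_iSup_ramanujanAvg_mul_two_pow_le (hW : ∀ p ∈ W, p.Prime) (hM : modulus W ∣ M)
    (hM0 : 0 < M) (K : ℕ) {f : ℤ → ℝ} (hf : f.support.Finite) :
    l2Norm (fun x => ⨆ n : ℕ, ‖ramanujanAvg W (K * 2 ^ n) f x‖ₑ) ≤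
      2 ^ (#W + 1) * l2Norm (ramanujanAvg W M f) +
        ENNReal.ofReal (4 * (modulus W ^ 2 * M / K)) * l2Norm f := by
  set g := ramanujanAvg W M f
  set err : ℕ → ℤ → ℝ := fun n x => ramanujanAvg W (K * 2 ^ n) g x - ramanujanAvg W (K * 2 ^ n) f x
  have pointwise : ∀ n x, ‖ramanujanAvg W (K * 2 ^ n) f x‖ₑ ≤
      (⨆ N : ℕ, ‖ramanujanAvg W N g x‖ₑ) + ∑' i, ‖err i x‖ₑ := fun n x => by
    calc ‖ramanujanAvg W (K * 2 ^ n) f x‖ₑ = ‖ramanujanAvg W (K * 2 ^ n) g x - err n x‖ₑ := by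
          simp only [err, sub_sub_cancel]
      _ ≤ ‖ramanujanAvg W (K * 2 ^ n) g x‖ₑ + ‖err n x‖ₑ := enorm_sub_le
      _ ≤ _ := add_le_add (le_iSup (fun N : ℕ => ‖ramanujanAvg W N g x‖ₑ) _) (ENNReal.le_tsum n)
  have err_le : ∀ n, l2Norm (fun x => ‖err n x‖ₑ) ≤
      ENNReal.ofReal (2 * (modulus W ^ 2 * M / K) * (1 / 2) ^ n) * l2Norm f := fun n => by
    simp only [l2Norm, eLpNorm_enorm]
    refine (l2Norm_ramanujanAvg_ramanujanAvg_sub_le hW hM hM0 _ f).trans_eq ?_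
    congr 2
    push_cast
    rw [one_div, inv_pow]
    ring
  calc _ ≤ l2Norm (fun x => (⨆ N : ℕ, ‖ramanujanAvg W N g x‖ₑ) + ∑' i, ‖err i x‖ₑ) :=
        l2Norm_mono fun x => iSup_le fun n => pointwise n x
    _ ≤ 2 ^ (#W + 1) * l2Norm g +
        ∑' n : ℕ, ENNReal.ofReal (2 * (modulus W ^ 2 * M / K) * (1 / 2) ^ n) * l2Norm f :=
        (l2Norm_add_le _ _).trans <| add_le_add
          (l2Norm_iSup_ramanujanAvg_le hW (finite_support_ramanujanAvg W M hf))
          ((l2Norm_tsum_le _).trans (ENNReal.tsum_le_tsum err_le))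
    _ = _ := by
        rw [ENNReal.tsum_mul_right, ← ENNReal.ofReal_tsum_of_nonneg (fun n => by positivity)
          (summable_geometric_two.mul_left _), tsum_mul_left, tsum_geometric_two]
        ring_nf

end Smoothing

lemma ennreal_sq_sum_le_card_mul_sum_sq {ι : Type*} (s : Finset ι) (a : ι → ℝ≥0∞) :
    (∑ i ∈ s, a i) ^ 2 ≤ #s * ∑ i ∈ s, a i ^ 2 := by
  simpa [show (2 : ℝ) - 1 = 1 by norm_num] using
    ENNReal.rpow_sum_le_const_mul_sum_rpow s a one_le_two

section Block

variable {B : Finset (Finset ℕ)} {W V : Finset ℕ} {P : ℕ} {D : ℝ} {f : ℤ → ℝ}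

lemma inv_add_inv_mul_modulus_sq_le (hP : 0 < P) (hW : ∀ p ∈ W, p.Prime) (hV : ∀ p ∈ V, p.Prime)
    (hWP : modulus W ≤ 2 * P) (hVP : modulus V ≤ 2 * P) :
    (((modulus W * P ^ 4 : ℕ) : ℝ)⁻¹ + ((modulus V * P ^ 4 : ℕ) : ℝ)⁻¹) *
      (modulus W * modulus V) ^ 2 ≤ 16 / P := by
  have : (0 : ℝ) < P := by exact_mod_cast hP
  have hW0 : (0 : ℝ) < modulus W := by exact_mod_cast modulus_pos hW
  have hV0 : (0 : ℝ) < modulus V := by exact_mod_cast modulus_pos hV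
  have hWP' : (modulus W : ℝ) ≤ 2 * P := by exact_mod_cast hWP
  have hVP' : (modulus V : ℝ) ≤ 2 * P := by exact_mod_cast hVP
  push_cast
  calc _ = (modulus W + modulus V) * (modulus W * modulus V : ℝ) / P ^ 4 := by
        field_simp
        ring
    _ ≤ (2 * P + 2 * P) * (2 * P * (2 * P)) / P ^ 4 := by gcongr
    _ = 16 / P := by
        field_simp
        ring

lemma sum_l2Norm_ramanujanAvg_le (hP : 0 < P) (hB : ∀ W ∈ B, ∀ p ∈ W, p.Prime)
    (hq : ∀ W ∈ B, modulus W ≤ 2 * P) (hc : #B ≤ P) (hD1 : 1 ≤ D)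
    (hD : ∀ W ∈ B, (2 : ℝ) ^ #W ≤ D) (hf : f.support.Finite) :
    ∑ W ∈ B, l2Norm (ramanujanAvg W (modulus W * P ^ 4) f) ≤
      ENNReal.ofReal (5 * D * √P) * l2Norm f := by
  have hP0 : (0 : ℝ) < P := by exact_mod_cast hP
  have hD2 : 1 ≤ D ^ 2 := one_le_pow₀ hD1
  refine (ENNReal.pow_le_pow_left_iff two_ne_zero).1 ?_
  calc _ ≤ #B * ∑ W ∈ B, l2Norm (ramanujanAvg W (modulus W * P ^ 4) f) ^ 2 :=
        ennreal_sq_sum_le_card_mul_sum_sq _ _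
    _ ≤ #B * (ENNReal.ofReal (D ^ 2 + 16 / P * #B) * l2Norm f ^ 2) := by
        gcongr
        exact sum_l2Norm_sq_ramanujanAvg_le hB
          (fun W hW => Nat.mul_pos (modulus_pos (hB W hW)) (by positivity)) hD (by positivity)
          (fun W hW V hV =>
            inv_add_inv_mul_modulus_sq_le hP (hB W hW) (hB V hV) (hq W hW) (hq V hV)) hf
    _ = ENNReal.ofReal (#B * (D ^ 2 + 16 / P * #B)) * l2Norm f ^ 2 := by
        rw [ENNReal.ofReal_mul (Nat.cast_nonneg _), ENNReal.ofReal_natCast, mul_assoc]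
    _ ≤ ENNReal.ofReal (P * (D ^ 2 + 16 / P * P)) * l2Norm f ^ 2 := by gcongr
    _ ≤ (ENNReal.ofReal (5 * D * √P) * l2Norm f) ^ 2 := by
        rw [mul_pow, ← ENNReal.ofReal_pow (by positivity), div_mul_cancel₀ _ hP0.ne']
        gcongr
        rw [mul_pow, Real.sq_sqrt hP0.le]
        nlinarith

lemma l2Norm_iSup_ramanujanAvg_pow_nine_mul_le (hP : 0 < P) (hW : ∀ p ∈ W, p.Prime)
    (hq : modulus W ≤ 2 * P) (hf : f.support.Finite) :
    l2Norm (fun x => ⨆ n : ℕ, ‖ramanujanAvg W (P ^ 9 * 2 ^ n) f x‖ₑ) ≤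
      ENNReal.ofReal (2 * 2 ^ #W) * l2Norm (ramanujanAvg W (modulus W * P ^ 4) f) +
        ENNReal.ofReal (32 / P ^ 2) * l2Norm f := by
  have : (0 : ℝ) < P := by exact_mod_cast hP
  have hqP : (modulus W : ℝ) ≤ 2 * P := by exact_mod_cast hq
  refine (l2Norm_iSup_ramanujanAvg_mul_two_pow_le hW (dvd_mul_right _ (P ^ 4))
    (Nat.mul_pos (modulus_pos hW) (by positivity)) _ hf).trans ?_
  rw [← pow_succ', ENNReal.ofReal_pow zero_le_two, ENNReal.ofReal_ofNat]
  gcongr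
  push_cast
  calc 4 * ((modulus W : ℝ) ^ 2 * (modulus W * (P : ℝ) ^ 4) / (P : ℝ) ^ 9)
      ≤ 4 * ((2 * (P : ℝ)) ^ 2 * (2 * P * (P : ℝ) ^ 4) / (P : ℝ) ^ 9) := by gcongr
    _ = (32 : ℝ) / (P : ℝ) ^ 2 := by
      field_simp
      norm_num

lemma four_pow_card_div_modulus_le (hP : 0 < P) (hq : P ≤ modulus W) (hD : (2 : ℝ) ^ #W ≤ D) :
    (4 : ℝ) ^ #W / modulus W ≤ D ^ 2 / P := by
  have four_pow : (4 : ℝ) ^ #W = (2 ^ #W) ^ 2 := by rw [← pow_mul, mul_comm, pow_mul]; norm_num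
  rw [four_pow]
  gcongr

lemma block_constants_le {P D : ℝ} (hP : 1 ≤ P) (hD : 1 ≤ D) :
    D ^ 2 / P * (2 * D * (5 * D * √P) + P * (32 / P ^ 2)) ≤ 42 * D ^ 4 / √P := by
  have : 0 < P := one_pos.trans_le hP
  have sqrt_le : √P ≤ P ^ 2 :=
    (Real.sqrt_le_self_iff.2 (.inr hP)).trans (le_self_pow₀ hP two_ne_zero)
  calc D ^ 2 / P * (2 * D * (5 * D * √P) + P * (32 / P ^ 2))
      = 10 * D ^ 4 * (√P / P) + 32 * D ^ 2 / P ^ 2 := by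
        field_simp
        ring
    _ ≤ 10 * D ^ 4 * (1 / √P) + 32 * D ^ 4 / √P := by
        rw [Real.sqrt_div_self']
        gcongr
        norm_num
    _ = 42 * D ^ 4 / √P := by ring

lemma l2Norm_iSup_sum_ramanujanAvg_le (hP : 0 < P) (hB : ∀ W ∈ B, ∀ p ∈ W, p.Prime)
    (hq1 : ∀ W ∈ B, P ≤ modulus W) (hq2 : ∀ W ∈ B, modulus W ≤ 2 * P) (hc : #B ≤ P)
    (hD1 : 1 ≤ D) (hD : ∀ W ∈ B, (2 : ℝ) ^ #W ≤ D) (hf : f.support.Finite) :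
    l2Norm (fun x => ⨆ n : ℕ, ∑ W ∈ B,
        ENNReal.ofReal (4 ^ #W / modulus W) * ‖ramanujanAvg W (P ^ 9 * 2 ^ n) f x‖ₑ) ≤
      ENNReal.ofReal (42 * D ^ 4 / √P) * l2Norm f := by
  have : 0 ≤ D := zero_le_one.trans hD1
  calc _ ≤ l2Norm (fun x => ∑ W ∈ B, ENNReal.ofReal (D ^ 2 / P) *
          ⨆ n : ℕ, ‖ramanujanAvg W (P ^ 9 * 2 ^ n) f x‖ₑ) :=
        l2Norm_mono fun x => iSup_le fun n => sum_le_sum fun W hW => mul_le_mul'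
          (ENNReal.ofReal_le_ofReal (four_pow_card_div_modulus_le hP (hq1 W hW) (hD W hW)))
          (le_iSup (fun n : ℕ => ‖ramanujanAvg W (P ^ 9 * 2 ^ n) f x‖ₑ) n)
    _ ≤ ∑ W ∈ B, ENNReal.ofReal (D ^ 2 / P) * (ENNReal.ofReal (2 * D) *
          l2Norm (ramanujanAvg W (modulus W * P ^ 4) f) +
            ENNReal.ofReal (32 / P ^ 2) * l2Norm f) := by
        refine (l2Norm_sum_le _ _).trans (sum_le_sum fun W hW => ?_)
        rw [l2Norm_const_mul]
        gcongr
        refine (l2Norm_iSup_ramanujanAvg_pow_nine_mul_le hP (hB W hW) (hq2 W hW) hf).trans ?_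
        gcongr
        exact hD W hW
    _ = ENNReal.ofReal (D ^ 2 / P) * (ENNReal.ofReal (2 * D) *
          ∑ W ∈ B, l2Norm (ramanujanAvg W (modulus W * P ^ 4) f) +
            #B * (ENNReal.ofReal (32 / P ^ 2) * l2Norm f)) := by
        rw [← mul_sum, sum_add_distrib, ← mul_sum, sum_const, nsmul_eq_mul]
    _ ≤ ENNReal.ofReal (D ^ 2 / P) * (ENNReal.ofReal (2 * D) *
          (ENNReal.ofReal (5 * D * √P) * l2Norm f) +
            ENNReal.ofReal P * (ENNReal.ofReal (32 / P ^ 2) * l2Norm f)) := by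
        rw [ENNReal.ofReal_natCast]
        gcongr
        exact sum_l2Norm_ramanujanAvg_le hP hB hq2 hc hD1 hD hf
    _ = ENNReal.ofReal (D ^ 2 / P * (2 * D * (5 * D * √P) + P * (32 / P ^ 2))) * l2Norm f := by
        rw [ENNReal.ofReal_mul (p := D ^ 2 / P) (by positivity),
          ENNReal.ofReal_add (by positivity) (by positivity),
          ENNReal.ofReal_mul (p := 2 * D) (by positivity),
          ENNReal.ofReal_mul (p := P) P.cast_nonneg]
        ring
    _ ≤ ENNReal.ofReal (42 * D ^ 4 / √P) * l2Norm f := by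
        gcongr
        exact block_constants_le (by exact_mod_cast hP) hD1

end Block

/-! ### The Selberg sieve -/

lemma sum_comp_le_sum_of_injOn {ι κ : Type*} {s : Finset ι} {t : Finset κ} {φ : ι → κ} {g : κ → ℝ}
    (hmaps : ∀ i ∈ s, φ i ∈ t) (hinj : Set.InjOn φ s) (hg : ∀ j ∈ t, 0 ≤ g j) :
    ∑ i ∈ s, g (φ i) ≤ ∑ j ∈ t, g j := by
  classical
  rw [← sum_image (f := g) hinj]
  exact sum_le_sum_of_subset_of_nonneg (image_subset_iff.2 hmaps) fun j hj _ => hg j hj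

section Products

open scoped symmDiff

variable {U V H : Finset ℕ}

lemma disjoint_symmDiff_of_subset_inter (hH : H ⊆ U ∩ V) : Disjoint (U ∆ V) H :=
  (disjoint_symmDiff_inf U V).mono_right hH

lemma prod_mul_prod_eq_prod_symmDiff_mul {M : Type*} [CommMonoid M] (U V : Finset ℕ) (g : ℕ → M) :
    (∏ p ∈ U, g p) * ∏ p ∈ V, g p = (∏ p ∈ U ∆ V, g p) * (∏ p ∈ U ∩ V, g p) ^ 2 := by
  rw [← prod_union_inter, sq, ← mul_assoc,
    ← prod_union (disjoint_symmDiff_of_subset_inter Subset.rfl)]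
  congr 2
  exact (symmDiff_sup_inf U V).symm

/-- The coefficient of `ramanujanSum H` in the expansion of the square of `ramanujanSum I`, for
`H ⊆ I`. -/
noncomputable def squareCoeff (I H : Finset ℕ) : ℝ :=
  (∏ p ∈ H, ((p : ℝ) - 2)) * ∏ p ∈ I \ H, ((p : ℝ) - 1)

lemma localFactor_sq (p : ℕ) (n : ℤ) :
    localFactor p n ^ 2 = ((p : ℝ) - 2) * localFactor p n + ((p : ℝ) - 1) := by
  unfold localFactor
  split_ifs <;> ring

lemma ramanujanSum_sq (I : Finset ℕ) (n : ℤ) :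
    ramanujanSum I n ^ 2 = ∑ H ∈ I.powerset, squareCoeff I H * ramanujanSum H n := by
  simp only [ramanujanSum, squareCoeff, ← prod_pow, localFactor_sq, prod_add, prod_mul_distrib]
  refine sum_congr rfl fun H _ => ?_
  ring

lemma ramanujanSum_mul_ramanujanSum (U V : Finset ℕ) (n : ℤ) :
    ramanujanSum U n * ramanujanSum V n = ∑ H ∈ (U ∩ V).powerset,
      squareCoeff (U ∩ V) H * ramanujanSum (U ∆ V ∪ H) n := by
  have split : ramanujanSum U n * ramanujanSum V n =
      ramanujanSum (U ∆ V) n * ramanujanSum (U ∩ V) n ^ 2 :=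
    prod_mul_prod_eq_prod_symmDiff_mul U V _
  rw [split, ramanujanSum_sq, mul_sum]
  refine sum_congr rfl fun H hH => ?_
  simp only [ramanujanSum, prod_union (disjoint_symmDiff_of_subset_inter (mem_powerset.1 hH))]
  ring

lemma modulus_mul_modulus (hH : H ⊆ U ∩ V) :
    modulus U * modulus V =
      modulus (U ∆ V ∪ H) * modulus ((U ∩ V) \ H) * modulus (U ∩ V) := by
  simp only [modulus]
  rw [prod_mul_prod_eq_prod_symmDiff_mul, prod_union (disjoint_symmDiff_of_subset_inter hH), sq,
    ← prod_sdiff hH]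
  ring

lemma abs_squareCoeff_le {I : Finset ℕ} (hI : ∀ p ∈ I, p.Prime) (hH : H ⊆ I) :
    |squareCoeff I H| ≤ modulus I := by
  have two_le : ∀ p ∈ I, (2 : ℝ) ≤ p := fun p hp => by exact_mod_cast (hI p hp).two_le
  rw [squareCoeff, modulus, Nat.cast_prod, ← prod_sdiff hH, mul_comm, abs_mul, abs_prod, abs_prod]
  gcongr with p hp p hp
  · rw [abs_of_nonneg] <;> linarith [two_le p (mem_sdiff.1 hp).1]
  · rw [abs_of_nonneg] <;> linarith [two_le p (hH hp)]

lemma abs_squareCoeff_div_le (hU : ∀ p ∈ U, p.Prime) (hV : ∀ p ∈ V, p.Prime) (hH : H ⊆ U ∩ V) :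
    |squareCoeff (U ∩ V) H| / (modulus U * modulus V) ≤
      1 / (modulus (U ∆ V ∪ H) * modulus ((U ∩ V) \ H)) := by
  have inter_prime : ∀ p ∈ U ∩ V, p.Prime := fun p hp => hU p (mem_inter.1 hp).1
  have split : (modulus U * modulus V : ℝ) =
      modulus (U ∆ V ∪ H) * modulus ((U ∩ V) \ H) * modulus (U ∩ V) := by
    exact_mod_cast modulus_mul_modulus hH
  have hU0 : (0 : ℝ) < modulus U := by exact_mod_cast modulus_pos hU
  have hV0 : (0 : ℝ) < modulus V := by exact_mod_cast modulus_pos hV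
  have hI0 : (0 : ℝ) < modulus (U ∩ V) := by exact_mod_cast modulus_pos inter_prime
  calc _ ≤ (modulus (U ∩ V) : ℝ) / (modulus U * modulus V) := by
        gcongr
        exact abs_squareCoeff_le inter_prime hH
    _ = _ := by rw [split, div_mul_cancel_right₀ hI0.ne', one_div]

lemma eq_of_symmDiff_union_eq {U' V' : Finset ℕ} (hH : H ⊆ U ∩ V) (hH' : H ⊆ U' ∩ V')
    (hW : U ∆ V ∪ H = U' ∆ V' ∪ H) (hK : (U ∩ V) \ H = (U' ∩ V') \ H) (hA : U \ V = U' \ V') :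
    U = U' ∧ V = V' := by
  have inter_eq : U ∩ V = U' ∩ V' := by
    rw [← sdiff_union_of_subset hH, ← sdiff_union_of_subset hH', hK]
  have symmDiff_eq : U ∆ V = U' ∆ V' := by
    rw [← (disjoint_symmDiff_of_subset_inter hH).sdiff_eq_left,
      ← (disjoint_symmDiff_of_subset_inter hH').sdiff_eq_left, ← union_sdiff_right, hW,
      union_sdiff_right]
  have eq_left : U = U' := by
    rw [← sdiff_union_inter U V, hA, inter_eq, sdiff_union_inter]
  refine ⟨eq_left, ?_⟩
  rw [← symmDiff_symmDiff_cancel_left U V, symmDiff_eq, eq_left, symmDiff_symmDiff_cancel_left]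

end Products

section Sieve

open scoped symmDiff

variable {P : Finset ℕ} {R N : ℕ}

/-- The squarefree moduli `≤ R` built from the primes of `P`, the support of the sieve. -/
def sieveSupport (P : Finset ℕ) (R : ℕ) : Finset (Finset ℕ) :=
  P.powerset.filter fun U => modulus U ≤ R

/-- The normalising factor of the sieve, the value of `sieveWeight` at primes beyond `R`. -/
noncomputable def sieveMass (P : Finset ℕ) (R : ℕ) : ℝ :=
  ∑ U ∈ sieveSupport P R, (1 : ℝ) / modulus U

/-- The function whose square is the (unnormalised) Selberg majorant of the primes in `(R, ∞)`,
written as a combination of Ramanujan sums. -/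
noncomputable def sieveWeight (P : Finset ℕ) (R : ℕ) (n : ℤ) : ℝ :=
  ∑ U ∈ sieveSupport P R, (-1) ^ #U / (modulus U : ℝ) * ramanujanSum U n

lemma mem_sieveSupport {U : Finset ℕ} : U ∈ sieveSupport P R ↔ U ⊆ P ∧ modulus U ≤ R := by
  rw [sieveSupport, mem_filter, mem_powerset]

lemma sieveMass_nonneg (P : Finset ℕ) (R : ℕ) : 0 ≤ sieveMass P R :=
  sum_nonneg fun _ _ => by positivity

lemma sieveWeight_prime (hP : ∀ p ∈ P, p.Prime) (hPR : ∀ p ∈ P, p ≤ R) {p : ℕ} (hp : p.Prime)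
    (hpR : R < p) : sieveWeight P R p = sieveMass P R := by
  refine sum_congr rfl fun U hU => ?_
  have hUP := (mem_sieveSupport.1 hU).1
  have eval : ramanujanSum U p = (-1) ^ #U := by
    refine prod_eq_pow_card fun q hq => ?_
    have not_dvd : ¬ (q : ℤ) ∣ p := fun h => by
      have := (Nat.prime_dvd_prime_iff_eq (hP q (hUP hq)) hp).1 (by exact_mod_cast h)
      have := hPR q (hUP hq)
      lia
    rw [localFactor, if_neg not_dvd, mul_zero, zero_sub]
  rw [eval, div_mul_eq_mul_div, ← mul_pow, neg_one_mul, neg_neg, one_pow]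

lemma sieveWeight_sq (P : Finset ℕ) (R : ℕ) (n : ℤ) :
    sieveWeight P R n ^ 2 =
      ∑ z ∈ (sieveSupport P R ×ˢ sieveSupport P R).sigma fun w => (w.1 ∩ w.2).powerset,
        (-1) ^ (#z.1.1 + #z.1.2) * (squareCoeff (z.1.1 ∩ z.1.2) z.2 /
          (modulus z.1.1 * modulus z.1.2)) * ramanujanSum (z.1.1 ∆ z.1.2 ∪ z.2) n := by
  rw [sum_sigma, sum_product, sq, sieveWeight, sum_mul_sum]
  refine sum_congr rfl fun U _ => sum_congr rfl fun V _ => ?_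
  rw [mul_mul_mul_comm, ramanujanSum_mul_ramanujanSum, mul_sum]
  refine sum_congr rfl fun H _ => ?_
  rw [pow_add]
  ring

lemma sum_sieveWeight_sq_mul_div_eq (P : Finset ℕ) (R N : ℕ) (f : ℤ → ℝ) (x : ℤ) :
    (∑ n ∈ range N, sieveWeight P R (n + 1) ^ 2 * f (x + (n + 1))) / N =
      ∑ z ∈ (sieveSupport P R ×ˢ sieveSupport P R).sigma fun w => (w.1 ∩ w.2).powerset,
        (-1) ^ (#z.1.1 + #z.1.2) * (squareCoeff (z.1.1 ∩ z.1.2) z.2 /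
          (modulus z.1.1 * modulus z.1.2)) * ramanujanAvg (z.1.1 ∆ z.1.2 ∪ z.2) N f x := by
  simp only [sieveWeight_sq, sum_mul, ramanujanAvg]
  rw [sum_comm, sum_div]
  refine sum_congr rfl fun z _ => ?_
  simp only [mul_assoc, ← mul_sum, mul_div_assoc]

lemma modulus_le_modulus {U V : Finset ℕ} (hV : ∀ p ∈ V, p.Prime) (hUV : U ⊆ V) :
    modulus U ≤ modulus V :=
  prod_le_prod_of_subset_of_one_le' hUV fun p hp _ => (hV p hp).one_le

lemma symmDiff_union_mem_sieveSupport {U V H : Finset ℕ} (hP : ∀ p ∈ P, p.Prime)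
    (hU : U ∈ sieveSupport P R) (hV : V ∈ sieveSupport P R) (hH : H ⊆ U ∩ V) :
    U ∆ V ∪ H ∈ sieveSupport P (R ^ 2) := by
  rw [mem_sieveSupport] at hU hV ⊢
  have sub_union : U ∆ V ∪ H ⊆ U ∪ V :=
    union_subset symmDiff_le_sup (hH.trans inter_subset_union)
  have union_sub : U ∪ V ⊆ P := union_subset hU.1 hV.1
  refine ⟨sub_union.trans union_sub, ?_⟩
  calc modulus (U ∆ V ∪ H) ≤ modulus (U ∪ V) :=
        modulus_le_modulus (fun p hp => hP p (union_sub hp)) sub_union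
    _ ≤ modulus U * modulus V := modulus_union_le fun p hp => hP p (hU.1 hp)
    _ ≤ R * R := Nat.mul_le_mul hU.2 hV.2
    _ = R ^ 2 := (sq R).symm

/- The moduli `W = U ∆ V ∪ H` and `K = (U ∩ V) \ H` together with the subsets `U \ V` and `H` of `W`
determine `U`, `V` and `H`, so each pair `(W, K)` occurs at most `4 ^ #W` times. -/
lemma sum_sigma_inv_modulus_mul_le (hP : ∀ p ∈ P, p.Prime) {a : Finset ℕ → ℝ} (ha : ∀ W, 0 ≤ a W) :
    ∑ z ∈ (sieveSupport P R ×ˢ sieveSupport P R).sigma fun w => (w.1 ∩ w.2).powerset,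
      1 / ((modulus (z.1.1 ∆ z.1.2 ∪ z.2) : ℝ) * modulus ((z.1.1 ∩ z.1.2) \ z.2)) *
        a (z.1.1 ∆ z.1.2 ∪ z.2) ≤
      sieveMass P R * ∑ W ∈ sieveSupport P (R ^ 2), 4 ^ #W / (modulus W : ℝ) * a W := by
  calc _ ≤ ∑ y ∈ (sieveSupport P (R ^ 2) ×ˢ sieveSupport P R).sigma fun w =>
          w.1.powerset ×ˢ w.1.powerset, 1 / ((modulus y.1.1 : ℝ) * modulus y.1.2) * a y.1.1 := by
        refine sum_comp_le_sum_of_injOn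
          (φ := fun z : (_ : Finset ℕ × Finset ℕ) × Finset ℕ =>
            (⟨(z.1.1 ∆ z.1.2 ∪ z.2, (z.1.1 ∩ z.1.2) \ z.2), (z.1.1 \ z.1.2, z.2)⟩ :
              (_ : Finset ℕ × Finset ℕ) × (Finset ℕ × Finset ℕ)))
          (g := fun y => 1 / ((modulus y.1.1 : ℝ) * modulus y.1.2) * a y.1.1) ?_ ?_ ?_
        · rintro ⟨⟨U, V⟩, H⟩ hz
          simp only [mem_sigma, mem_product, mem_powerset] at hz ⊢
          obtain ⟨⟨hU, hV⟩, hH⟩ := hz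
          have hUP := mem_sieveSupport.1 hU
          have sub_left : (U ∩ V) \ H ⊆ U := sdiff_subset.trans inter_subset_left
          refine ⟨⟨symmDiff_union_mem_sieveSupport hP hU hV hH, mem_sieveSupport.2
            ⟨sub_left.trans hUP.1, (modulus_le_modulus (fun p hp => hP p (hUP.1 hp)) sub_left).trans
              hUP.2⟩⟩, subset_union_left.trans subset_union_left, subset_union_right⟩
        · rintro ⟨⟨U, V⟩, H⟩ hz ⟨⟨U', V'⟩, H'⟩ hz' heq
          simp only [mem_coe, mem_sigma, mem_powerset] at hz hz'
          simp only [Sigma.mk.injEq, Prod.mk.injEq, heq_eq_eq] at heq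
          obtain ⟨⟨hW, hK⟩, hA, rfl⟩ := heq
          obtain ⟨rfl, rfl⟩ := eq_of_symmDiff_union_eq hz.2 hz'.2 hW hK hA
          rfl
        · exact fun y _ => mul_nonneg (by positivity) (ha _)
    _ = _ := by
        rw [sum_sigma, sum_product_right, sieveMass, sum_mul_sum]
        refine sum_congr rfl fun K _ => sum_congr rfl fun W _ => ?_
        dsimp only
        rw [sum_const, card_product, card_powerset, nsmul_eq_mul, ← mul_pow]
        norm_num
        ring

lemma sum_sieveWeight_sq_mul_div_le (hP : ∀ p ∈ P, p.Prime) (f : ℤ → ℝ) (x : ℤ) :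
    (∑ n ∈ range N, sieveWeight P R (n + 1) ^ 2 * f (x + (n + 1))) / N ≤
      sieveMass P R * ∑ W ∈ sieveSupport P (R ^ 2),
        4 ^ #W / (modulus W : ℝ) * |ramanujanAvg W N f x| := by
  rw [sum_sieveWeight_sq_mul_div_eq]
  refine (sum_le_sum fun z hz => ?_).trans
    (sum_sigma_inv_modulus_mul_le hP fun W => abs_nonneg (ramanujanAvg W N f x))
  obtain ⟨⟨U, V⟩, H⟩ := z
  simp only [mem_sigma, mem_product, mem_powerset, mem_sieveSupport] at hz ⊢
  refine (le_abs_self _).trans ?_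
  rw [abs_mul, abs_mul, abs_neg_one_pow, one_mul, abs_div,
    abs_of_nonneg (by positivity : (0 : ℝ) ≤ modulus U * modulus V)]
  exact mul_le_mul_of_nonneg_right (abs_squareCoeff_div_le (fun p hp => hP p (hz.1.1.1 hp))
    (fun p hp => hP p (hz.1.2.1 hp)) hz.2) (abs_nonneg _)

lemma sum_log_mul_le_sum_sieveWeight_sq_mul (hP : ∀ p ∈ P, p.Prime) (hPR : ∀ p ∈ P, p ≤ R)
    (hG : 0 < sieveMass P R) {f : ℤ → ℝ} (hf : ∀ x, 0 ≤ f x) (x : ℤ) :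
    ∑ p ∈ primesUpTo N with R < p, Real.log p * f (x + p) ≤
      Real.log N / sieveMass P R ^ 2 *
        ∑ n ∈ range N, sieveWeight P R (n + 1) ^ 2 * f (x + (n + 1)) := by
  have mem : ∀ p ∈ (primesUpTo N).filter (R < ·), p ≤ N ∧ p.Prime ∧ R < p := fun p hp => by
    simpa only [primesUpTo, mem_filter, mem_range, Nat.lt_succ_iff, and_assoc] using hp
  calc _ ≤ ∑ p ∈ primesUpTo N with R < p,
        Real.log N / sieveMass P R ^ 2 * (sieveWeight P R p ^ 2 * f (x + p)) :=
        sum_le_sum fun p hp => by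
          obtain ⟨hpN, hp, hpR⟩ := mem p hp
          rw [sieveWeight_prime hP hPR hp hpR, ← mul_assoc,
            div_mul_cancel₀ _ (pow_pos hG 2).ne']
          have := hp.pos
          have := hf (x + p)
          gcongr
    _ ≤ ∑ p ∈ Ico 1 (N + 1),
        Real.log N / sieveMass P R ^ 2 * (sieveWeight P R p ^ 2 * f (x + p)) := by
        refine sum_le_sum_of_subset_of_nonneg (fun p hp => ?_) fun p _ _ =>
          mul_nonneg (by positivity) (mul_nonneg (sq_nonneg _) (hf _))
        obtain ⟨hpN, hp, -⟩ := mem p hp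
        exact mem_Ico.2 ⟨hp.one_le, Nat.lt_succ_of_le hpN⟩
    _ = _ := by
        rw [← mul_sum, sum_Ico_eq_sum_range, Nat.add_sub_cancel]
        simp only [Nat.cast_add, Nat.cast_one, add_comm (1 : ℤ)]

lemma sum_log_mul_div_le_sum_ramanujanAvg (hP : ∀ p ∈ P, p.Prime) (hPR : ∀ p ∈ P, p ≤ R)
    (hG : 0 < sieveMass P R) {f : ℤ → ℝ} (hf : ∀ x, 0 ≤ f x) (x : ℤ) :
    (∑ p ∈ primesUpTo N with R < p, Real.log p * f (x + p)) / N ≤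
      Real.log N / sieveMass P R * ∑ W ∈ sieveSupport P (R ^ 2),
        4 ^ #W / (modulus W : ℝ) * |ramanujanAvg W N f x| := by
  calc _ ≤ Real.log N / sieveMass P R ^ 2 *
        (∑ n ∈ range N, sieveWeight P R (n + 1) ^ 2 * f (x + (n + 1))) / N := by
        gcongr
        exact sum_log_mul_le_sum_sieveWeight_sq_mul hP hPR hG hf x
    _ ≤ Real.log N / sieveMass P R ^ 2 * (sieveMass P R * ∑ W ∈ sieveSupport P (R ^ 2),
        4 ^ #W / (modulus W : ℝ) * |ramanujanAvg W N f x|) := by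
        rw [mul_div_assoc]
        gcongr
        exact sum_sieveWeight_sq_mul_div_le hP f x
    _ = _ := by field_simp

end Sieve

/-! ### Estimates for primes -/

lemma mem_primesUpTo {p N : ℕ} : p ∈ primesUpTo N ↔ p ≤ N ∧ p.Prime := by
  rw [primesUpTo, mem_filter, mem_range, Nat.lt_succ_iff]

lemma sum_one_div_prime_Ioc_two_pow_le {k : ℕ} (hk : 1 ≤ k) :
    ∑ p ∈ Ioc ((2 : ℕ) ^ k) (2 ^ (k + 1)) with p.Prime, (1 : ℝ) / p ≤ 2 / k := by
  set s := (Ioc ((2 : ℕ) ^ k) (2 ^ (k + 1))).filter Nat.Prime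
  have mem : ∀ p ∈ s, 2 ^ k < p ∧ p ≤ 2 ^ k + 2 ^ k ∧ p.Prime := fun p hp => by
    rw [mem_filter, mem_Ioc, pow_succ, mul_two] at hp
    exact ⟨hp.1.1, hp.1.2, hp.2⟩
  have dvd_choose : ∏ p ∈ s, p ∣ (2 ^ k + 2 ^ k).choose (2 ^ k) :=
    prod_primes_dvd _ (fun p hp => (mem p hp).2.2.prime) fun p hp =>
      (mem p hp).2.2.dvd_choose_add (mem p hp).1 (mem p hp).1 (mem p hp).2.1
  have card_le : k * #s ≤ 2 ^ k + 2 ^ k := by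
    refine (Nat.pow_le_pow_iff_right one_lt_two).1 ?_
    calc 2 ^ (k * #s) = (2 ^ k) ^ #s := pow_mul _ _ _
      _ ≤ ∏ p ∈ s, p := pow_card_le_prod _ _ _ fun p hp => (mem p hp).1.le
      _ ≤ (2 ^ k + 2 ^ k).choose (2 ^ k) :=
        Nat.le_of_dvd (Nat.choose_pos (Nat.le_add_left _ _)) dvd_choose
      _ ≤ 2 ^ (2 ^ k + 2 ^ k) := Nat.choose_le_two_pow _ _
  have card_le' : (k * #s : ℝ) ≤ 2 ^ k + 2 ^ k := by exact_mod_cast card_le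
  calc ∑ p ∈ s, (1 : ℝ) / p ≤ ∑ p ∈ s, (1 : ℝ) / 2 ^ k := sum_le_sum fun p hp => by
        gcongr
        exact_mod_cast (mem p hp).1.le
    _ = #s / 2 ^ k := by rw [sum_const, nsmul_eq_mul, mul_one_div]
    _ ≤ 2 / k := by
        rw [div_le_div_iff₀ (by positivity) (by positivity)]
        linarith

lemma exp_one_div_le {x : ℝ} (hx : 1 < x) : Real.exp (1 / x) ≤ x / (x - 1) := by
  have hx0 : 0 < x := one_pos.trans hx
  have pos : 0 < 1 - 1 / x := by
    rw [sub_pos, div_lt_one hx0]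
    exact hx
  have le_exp : 1 - 1 / x ≤ (Real.exp (1 / x))⁻¹ := by
    rw [← Real.exp_neg]
    exact Real.one_sub_le_exp_neg _
  calc Real.exp (1 / x) ≤ (1 - 1 / x)⁻¹ := le_inv_of_le_inv₀ pos le_exp
    _ = x / (x - 1) := by rw [one_sub_div hx0.ne', inv_div]

lemma prod_one_add_one_div_prime_Ioc_two_pow_le {k : ℕ} (hk : 2 ≤ k) :
    ∏ p ∈ Ioc ((2 : ℕ) ^ k) (2 ^ (k + 1)) with p.Prime, (1 + (1 : ℝ) / p) ≤ (k / (k - 1)) ^ 2 := by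
  have hk' : (1 : ℝ) < k := by exact_mod_cast hk
  calc _ ≤ ∏ p ∈ Ioc ((2 : ℕ) ^ k) (2 ^ (k + 1)) with p.Prime, Real.exp (1 / p) :=
        prod_le_prod (fun _ _ => by positivity) fun p _ => by
          rw [add_comm]
          exact Real.add_one_le_exp _
    _ = Real.exp (∑ p ∈ Ioc ((2 : ℕ) ^ k) (2 ^ (k + 1)) with p.Prime, (1 : ℝ) / p) :=
        (Real.exp_sum _ _).symm
    _ ≤ Real.exp (2 / k) := Real.exp_le_exp.2 (sum_one_div_prime_Ioc_two_pow_le (by lia))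
    _ = Real.exp (1 / k) ^ 2 := by
        rw [← Real.exp_nat_mul]
        ring_nf
    _ ≤ (k / (k - 1)) ^ 2 := by
        gcongr
        exact exp_one_div_le hk'

lemma prod_one_add_one_div_primesUpTo_two_pow_le {m : ℕ} (hm : 2 ≤ m) :
    ∏ p ∈ primesUpTo (2 ^ m), (1 + (1 : ℝ) / p) ≤ 2 * ((m : ℝ) - 1) ^ 2 := by
  induction m, hm using Nat.le_induction with
  | base =>
    rw [show primesUpTo (2 ^ 2) = {2, 3} by decide]
    norm_num
  | succ k hk ih =>
    have hk' : (1 : ℝ) < k := by exact_mod_cast hk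
    have hpow : 2 ^ k ≤ 2 ^ (k + 1) := Nat.pow_le_pow_right two_pos k.le_succ
    have split : primesUpTo (2 ^ (k + 1)) =
        primesUpTo (2 ^ k) ∪ (Ioc (2 ^ k) (2 ^ (k + 1))).filter Nat.Prime := by
      ext p
      simp only [mem_union, mem_primesUpTo, mem_filter, mem_Ioc]
      grind
    have disj : Disjoint (primesUpTo (2 ^ k)) ((Ioc (2 ^ k) (2 ^ (k + 1))).filter Nat.Prime) :=
      disjoint_left.2 fun p hp hp' =>
        (mem_Ioc.1 (mem_filter.1 hp').1).1.not_ge (mem_primesUpTo.1 hp).1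
    rw [split, prod_union disj]
    calc _ ≤ 2 * ((k : ℝ) - 1) ^ 2 * (k / (k - 1)) ^ 2 :=
          mul_le_mul ih (prod_one_add_one_div_prime_Ioc_two_pow_le hk)
            (prod_nonneg fun _ _ => by positivity) (by positivity)
      _ = _ := by
          have : (k : ℝ) - 1 ≠ 0 := (sub_pos.2 hk').ne'
          push_cast
          field_simp
          ring

/- Every `n` is a square times a squarefree number. -/
lemma sum_one_div_le_two_mul_sieveMass (R : ℕ) :
    ∑ n ∈ Icc 1 R, (1 : ℝ) / n ≤ 2 * sieveMass (primesUpTo R) R := by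
  choose a b hab using Nat.sq_mul_squarefree
  have prod_primeFactors : ∀ n, modulus (a n).primeFactors = a n := fun n =>
    Nat.prod_primeFactors_of_squarefree (hab n).2
  have factor : ∀ n, b n ^ 2 * modulus (a n).primeFactors = n := fun n => by
    rw [prod_primeFactors, (hab n).1]
  calc ∑ n ∈ Icc 1 R, (1 : ℝ) / n
      = ∑ n ∈ Icc 1 R, ((b n : ℝ) ^ 2)⁻¹ * (1 / modulus (a n).primeFactors) :=
        sum_congr rfl fun n _ => by
          rw [one_div, one_div, ← mul_inv]
          exact_mod_cast congrArg (fun k : ℕ => (k : ℝ)⁻¹) (factor n).symm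
    _ ≤ ∑ z ∈ Ioo 0 (R + 1) ×ˢ sieveSupport (primesUpTo R) R,
          ((z.1 : ℝ) ^ 2)⁻¹ * (1 / modulus z.2) := by
        refine sum_comp_le_sum_of_injOn (φ := fun n => (b n, (a n).primeFactors))
          (g := fun z => ((z.1 : ℝ) ^ 2)⁻¹ * (1 / modulus z.2)) (fun n hn => ?_)
          (fun n _ n' _ heq => ?_) fun _ _ => by positivity
        · obtain ⟨hn1, hnR⟩ := mem_Icc.1 hn
          have hb : b n ≠ 0 := fun h => by have := (hab n).1; simp [h] at this; lia
          have b_le : b n ≤ n := (Nat.le_self_pow two_ne_zero _).trans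
            (Nat.le_of_dvd hn1 (Dvd.intro _ (hab n).1))
          have a_le : a n ≤ n := Nat.le_of_dvd hn1 (Dvd.intro_left _ (hab n).1)
          rw [mem_product, mem_Ioo, mem_sieveSupport, prod_primeFactors]
          refine ⟨⟨Nat.pos_of_ne_zero hb, by lia⟩, fun p hp => ?_, a_le.trans hnR⟩
          exact mem_primesUpTo.2 ⟨(Nat.le_of_mem_primeFactors hp).trans (a_le.trans hnR),
            Nat.prime_of_mem_primeFactors hp⟩
        · rw [Prod.mk.injEq] at heq
          rw [← factor n, ← factor n', heq.1, heq.2]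
    _ = (∑ d ∈ Ioo 0 (R + 1), ((d : ℝ) ^ 2)⁻¹) * sieveMass (primesUpTo R) R := by
        rw [sum_product, sieveMass, sum_mul_sum]
    _ ≤ 2 * sieveMass (primesUpTo R) R := by
        refine mul_le_mul_of_nonneg_right ?_ (sieveMass_nonneg _ _)
        simpa using sum_Ioo_inv_sq_le (α := ℝ) 0 (R + 1)

lemma sieveMass_le_prod_mul_sieveMass_sdiff {P : Finset ℕ} (hP : ∀ p ∈ P, p.Prime)
    (Q : Finset ℕ) (R : ℕ) :
    sieveMass P R ≤ (∏ p ∈ Q, (1 + (1 : ℝ) / p)) * sieveMass (P \ Q) R := by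
  have split : ∀ U : Finset ℕ, modulus (U ∩ Q) * modulus (U \ Q) = modulus U := fun U => by
    rw [modulus, modulus, modulus, mul_comm, ← prod_union (disjoint_sdiff_inter U Q),
      sdiff_union_inter]
  calc sieveMass P R
      = ∑ U ∈ sieveSupport P R, (1 / (modulus (U ∩ Q) : ℝ)) * (1 / modulus (U \ Q)) :=
        sum_congr rfl fun U _ => by rw [one_div_mul_one_div, ← Nat.cast_mul, split]
    _ ≤ ∑ z ∈ Q.powerset ×ˢ sieveSupport (P \ Q) R,
          (1 / (modulus z.1 : ℝ)) * (1 / modulus z.2) := by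
        refine sum_comp_le_sum_of_injOn (φ := fun U => (U ∩ Q, U \ Q))
          (g := fun z => (1 / (modulus z.1 : ℝ)) * (1 / modulus z.2)) (fun U hU => ?_)
          (fun U _ U' _ heq => ?_) fun _ _ => by positivity
        · rw [mem_sieveSupport] at hU
          rw [mem_product, mem_powerset, mem_sieveSupport]
          exact ⟨inter_subset_right, sdiff_subset_sdiff hU.1 Subset.rfl,
            (modulus_le_modulus (fun p hp => hP p (hU.1 hp)) sdiff_subset).trans hU.2⟩
        · rw [Prod.mk.injEq] at heq
          rw [← sdiff_union_inter U Q, heq.1, heq.2, sdiff_union_inter]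
    _ = (∏ p ∈ Q, (1 + (1 : ℝ) / p)) * sieveMass (P \ Q) R := by
        rw [sum_product, prod_one_add, sieveMass, sum_mul_sum]
        simp only [modulus, Nat.cast_prod, one_div, prod_inv_distrib]

lemma mul_log_two_le_sieveMass {m : ℕ} (hm : 2 ≤ m) (r : ℕ) :
    r * Real.log 2 ≤
      4 * (m : ℝ) ^ 2 * sieveMass (primesUpTo (2 ^ r) \ primesUpTo (2 ^ m)) (2 ^ r) := by
  have hm' : (2 : ℝ) ≤ m := by exact_mod_cast hm
  have harmonic_ge : Real.log ((2 ^ r : ℕ) + 1) ≤ ∑ n ∈ Icc 1 ((2 : ℕ) ^ r), (1 : ℝ) / n := by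
    simpa [harmonic_eq_sum_Icc] using log_add_one_le_harmonic (2 ^ r)
  calc r * Real.log 2 = Real.log (2 ^ r) := (Real.log_pow _ _).symm
    _ ≤ Real.log ((2 ^ r : ℕ) + 1) :=
        Real.log_le_log (by positivity) (by push_cast; linarith)
    _ ≤ 2 * sieveMass (primesUpTo (2 ^ r)) (2 ^ r) :=
        harmonic_ge.trans (sum_one_div_le_two_mul_sieveMass _)
    _ ≤ 2 * (2 * ((m : ℝ) - 1) ^ 2 *
          sieveMass (primesUpTo (2 ^ r) \ primesUpTo (2 ^ m)) (2 ^ r)) := by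
        gcongr
        refine (sieveMass_le_prod_mul_sieveMass_sdiff (fun p hp => (mem_primesUpTo.1 hp).2)
          (primesUpTo (2 ^ m)) _).trans ?_
        gcongr
        · exact sieveMass_nonneg _ _
        · exact prod_one_add_one_div_primesUpTo_two_pow_le hm
    _ ≤ _ := by
        rw [← mul_assoc, ← mul_assoc]
        gcongr
        · exact sieveMass_nonneg _ _
        · norm_num
        · linarith
        · exact sub_le_self _ zero_le_one

lemma theta_eq_chebyshev (N : ℕ) : theta N = Chebyshev.theta N := by
  rw [Chebyshev.theta_eq_sum_Icc, Nat.floor_natCast, theta, primesUpTo, Nat.range_succ_eq_Icc_zero]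

lemma two_pow_div_le_theta_of_le {n : ℕ} (hn : 16 ≤ n) : (2 : ℝ) ^ n / 10 ≤ theta (2 ^ n) := by
  have sq_le : 196 * n ^ 2 ≤ 2 ^ n := by
    induction n, hn using Nat.le_induction with
    | base => norm_num
    | succ k hk ih => rw [pow_succ 2 k]; nlinarith
  have log_two_gt := Real.log_two_gt_d9
  have log_two_lt := Real.log_two_lt_d9
  have hn' : (16 : ℝ) ≤ n := by exact_mod_cast hn
  have chebyshev := Chebyshev.theta_ge (2 ^ n)
  rw [← theta_eq_chebyshev] at chebyshev
  push_cast at chebyshev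
  have sq_le' : (196 : ℝ) * (n : ℝ) ^ 2 ≤ 2 ^ n := by exact_mod_cast sq_le
  set X : ℝ := 2 ^ n with hX
  have hX1 : 1 ≤ X := one_le_pow₀ one_le_two
  have le_sqrt : 14 * n ≤ √X := Real.le_sqrt_of_sq_le <| by
    rw [mul_pow]
    linarith
  have sqrt_sq := Real.mul_self_sqrt (zero_le_one.trans hX1)
  have log_eq : Real.log X = n * Real.log 2 := Real.log_pow _ _
  have log_succ_le : Real.log (X + 1) ≤ n * Real.log 2 + 1 := by
    calc Real.log (X + 1) ≤ Real.log (2 * X) := Real.log_le_log (by linarith) (by linarith)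
      _ = Real.log 2 + Real.log X := Real.log_mul two_ne_zero (by positivity)
      _ ≤ n * Real.log 2 + 1 := by rw [log_eq]; linarith
  have log_le : n * Real.log 2 ≤ √X / 20 := by nlinarith
  have sqrt_mul_log_le : 2 * √X * (n * Real.log 2) ≤ X / 10 := by nlinarith [Real.sqrt_nonneg X]
  rw [log_eq] at chebyshev
  nlinarith

lemma two_pow_div_le_theta {n : ℕ} (hn : 1 ≤ n) : (2 : ℝ) ^ n / 2 ^ 16 ≤ theta (2 ^ n) := by
  rcases lt_or_ge n 16 with h | h
  · have log_two_le : Real.log (2 : ℕ) ≤ theta (2 ^ n) :=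
      single_le_sum (f := fun p : ℕ => Real.log p) (fun p _ => Real.log_natCast_nonneg p)
        (mem_primesUpTo.2 ⟨Nat.le_self_pow (by lia) 2, Nat.prime_two⟩)
    have pow_le : (2 : ℝ) ^ n ≤ 2 ^ 15 := pow_le_pow_right₀ one_le_two (by lia)
    have log_two_gt := Real.log_two_gt_d9
    norm_num at log_two_le pow_le ⊢
    linarith
  · refine le_trans ?_ (two_pow_div_le_theta_of_le h)
    gcongr
    norm_num

/-! ### Domination of averages over primes -/

/-- The nonempty sets of primes larger than `2 ^ m` whose modulus lies in `[2 ^ s, 2 ^ (s + 1))`. -/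
def dyadicBlock (m s : ℕ) : Finset (Finset ℕ) :=
  (primesUpTo (2 ^ (s + 1)) \ primesUpTo (2 ^ m)).powerset.filter fun W =>
    W.Nonempty ∧ 2 ^ s ≤ modulus W ∧ modulus W < 2 ^ (s + 1)

/-- The maximal function of the Ramanujan averages with index set in `dyadicBlock m s`, weighted as
in the sieve majorant, over the dyadic lengths that are long compared with the moduli. -/
noncomputable def blockMaximal (m s : ℕ) (f : ℤ → ℝ) (x : ℤ) : ℝ≥0∞ :=
  ⨆ n : ℕ, ∑ W ∈ dyadicBlock m s,
    ENNReal.ofReal (4 ^ #W / modulus W) * ‖ramanujanAvg W ((2 ^ s) ^ 9 * 2 ^ n) f x‖ₑ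

/-- The sum of `f` over the translates of `x` by primes up to `N`, with logarithmic weights. -/
noncomputable def primeSum (f : ℤ → ℝ) (N : ℕ) (x : ℤ) : ℝ :=
  ∑ p ∈ primesUpTo N, Real.log p * f (x + p)

/-- The part of the dyadic averages over primes that is not dominated by averages over intervals:
the primes up to the sieving level, and the Ramanujan averages with prime factors beyond `2 ^ m`. -/
noncomputable def primeError (m : ℕ) (f : ℤ → ℝ) (x : ℤ) : ℝ≥0∞ :=
  (∑' n : ℕ, if 20 * m ≤ n then ‖primeSum f (2 ^ (n / 20)) x / 2 ^ n‖ₑ else 0) +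
    ENNReal.ofReal (160 * m ^ 2) * ∑' s, blockMaximal m s f x

section DyadicBlock

variable {m s : ℕ} {W : Finset ℕ}

lemma mem_primesUpTo_sdiff {M N p : ℕ} :
    p ∈ primesUpTo N \ primesUpTo M ↔ M < p ∧ p ≤ N ∧ p.Prime := by
  simp only [mem_sdiff, mem_primesUpTo]
  grind

lemma le_modulus (hW : ∀ p ∈ W, p.Prime) {p : ℕ} (hp : p ∈ W) : p ≤ modulus W :=
  Nat.le_of_dvd (modulus_pos hW) (dvd_prod_of_mem _ hp)

lemma modulus_injOn : Set.InjOn modulus {W : Finset ℕ | ∀ p ∈ W, p.Prime} := fun W hW V hV h => by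
  rw [← Nat.primeFactors_prod hW, ← Nat.primeFactors_prod hV]
  exact congrArg Nat.primeFactors h

lemma mem_dyadicBlock : W ∈ dyadicBlock m s ↔
    (∀ p ∈ W, 2 ^ m < p ∧ p.Prime) ∧ W.Nonempty ∧ 2 ^ s ≤ modulus W ∧ modulus W < 2 ^ (s + 1) := by
  rw [dyadicBlock, mem_filter, mem_powerset]
  refine and_congr_left fun hW => ⟨fun h p hp => ?_, fun h p hp => ?_⟩
  · exact ⟨(mem_primesUpTo_sdiff.1 (h hp)).1, (mem_primesUpTo_sdiff.1 (h hp)).2.2⟩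
  · exact mem_primesUpTo_sdiff.2
      ⟨(h p hp).1, (le_modulus (fun q hq => (h q hq).2) hp).trans hW.2.2.le, (h p hp).2⟩

lemma prime_of_mem_dyadicBlock (hW : W ∈ dyadicBlock m s) : ∀ p ∈ W, p.Prime := fun p hp =>
  ((mem_dyadicBlock.1 hW).1 p hp).2

lemma dyadicBlock_eq_empty (h : s < m) : dyadicBlock m s = ∅ := by
  refine eq_empty_of_forall_notMem fun W hW => ?_
  obtain ⟨hprime, ⟨p, hp⟩, -, hlt⟩ := mem_dyadicBlock.1 hW
  have p_le := le_modulus (prime_of_mem_dyadicBlock hW) hp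
  have pow_le : 2 ^ (s + 1) ≤ 2 ^ m := Nat.pow_le_pow_right two_pos h
  have := (hprime p hp).1
  lia

lemma card_dyadicBlock_le (m s : ℕ) : #(dyadicBlock m s) ≤ 2 ^ s := by
  have card_le : #(dyadicBlock m s) ≤ #(Ico (2 ^ s) (2 ^ (s + 1))) :=
    card_le_card_of_injOn modulus
      (fun W hW => mem_coe.2 (mem_Ico.2 (mem_dyadicBlock.1 hW).2.2))
      (modulus_injOn.mono fun _ hW => prime_of_mem_dyadicBlock hW)
  rwa [Nat.card_Ico, pow_succ, mul_two, Nat.add_sub_cancel] at card_le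

lemma mul_card_le_of_mem_dyadicBlock (hW : W ∈ dyadicBlock m s) : m * #W ≤ s := by
  obtain ⟨hprime, -, -, hlt⟩ := mem_dyadicBlock.1 hW
  have pow_le : 2 ^ (m * #W) ≤ modulus W := by
    rw [pow_mul]
    exact pow_card_le_prod _ _ _ fun p hp => (hprime p hp).1.le
  exact Nat.lt_succ_iff.1 ((Nat.pow_lt_pow_iff_right one_lt_two).1 (pow_le.trans_lt hlt))

end DyadicBlock

section PrimeSum

variable {m n N : ℕ} {f : ℤ → ℝ}

lemma primeSum_le_log_mul_progressionSum (hf : ∀ x, 0 ≤ f x) (N : ℕ) (x : ℤ) :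
    primeSum f N x ≤ Real.log N * progressionSum 1 f N x := by
  have subset : primesUpTo N ⊆ Ico 1 (N + 1) := fun p hp =>
    mem_Ico.2 ⟨(mem_primesUpTo.1 hp).2.one_le, Nat.lt_succ_iff.2 (mem_primesUpTo.1 hp).1⟩
  calc primeSum f N x ≤ ∑ p ∈ primesUpTo N, Real.log N * f (x + p) :=
        sum_le_sum fun p hp => mul_le_mul_of_nonneg_right
          (Real.log_le_log (by exact_mod_cast (mem_primesUpTo.1 hp).2.pos)
            (by exact_mod_cast (mem_primesUpTo.1 hp).1)) (hf _)
    _ ≤ ∑ p ∈ Ico 1 (N + 1), Real.log N * f (x + (p : ℕ)) :=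
        sum_le_sum_of_subset_of_nonneg subset fun _ _ _ =>
          mul_nonneg (Real.log_natCast_nonneg N) (hf _)
    _ = Real.log N * progressionSum 1 f N x := by
        rw [← mul_sum, sum_Ico_eq_sum_range, progressionSum, Nat.add_sub_cancel]
        simp only [Nat.cast_add, Nat.cast_one, add_comm, mul_one]

lemma primeSum_le_add_sum_filter (hf : ∀ x, 0 ≤ f x) (R N : ℕ) (x : ℤ) :
    primeSum f N x ≤ primeSum f R x + ∑ p ∈ primesUpTo N with R < p, Real.log p * f (x + p) := by
  rw [primeSum, ← sum_filter_add_sum_filter_not _ (R < ·), add_comm]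
  gcongr
  refine sum_le_sum_of_subset_of_nonneg (fun p hp => ?_) fun p _ _ =>
    mul_nonneg (Real.log_natCast_nonneg p) (hf _)
  rw [mem_filter, mem_primesUpTo] at hp
  exact mem_primesUpTo.2 ⟨not_lt.1 hp.2, hp.1.2⟩

lemma norm_weightedPrimeAvg_le (hn : 1 ≤ n) (f : ℤ → ℂ) (x : ℤ) :
    ‖weightedPrimeAvg f (2 ^ n) x‖ ≤ 2 ^ 16 * (primeSum (fun y => ‖f y‖) (2 ^ n) x / 2 ^ n) := by
  have theta_ge := two_pow_div_le_theta hn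
  have theta_pos : 0 < theta (2 ^ n) := theta_ge.trans_lt' (by positivity)
  calc ‖weightedPrimeAvg f (2 ^ n) x‖
      ≤ (theta (2 ^ n))⁻¹ * primeSum (fun y => ‖f y‖) (2 ^ n) x := by
        rw [weightedPrimeAvg, norm_mul, norm_inv, Complex.norm_real,
          Real.norm_of_nonneg theta_pos.le]
        gcongr
        refine norm_sum_le_of_le _ fun p _ => ?_
        rw [norm_mul, Complex.norm_real, Real.norm_of_nonneg (Real.log_natCast_nonneg p), mul_comm]
    _ ≤ ((2 : ℝ) ^ n / 2 ^ 16)⁻¹ * primeSum (fun y => ‖f y‖) (2 ^ n) x := by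
        gcongr
        exact sum_nonneg fun p _ => mul_nonneg (Real.log_natCast_nonneg p) (norm_nonneg _)
    _ = _ := by rw [inv_div, div_mul_eq_mul_div, mul_div_assoc]

lemma primeSum_div_le_of_le (hf : ∀ x, 0 ≤ f x) (hn : n ≤ 20 * m) (x : ℤ) :
    primeSum f (2 ^ n) x / 2 ^ n ≤
      160 * m ^ 2 * (progressionSum 1 f (2 ^ n) x / (2 ^ n : ℕ)) := by
  have log_le : Real.log (2 ^ n : ℕ) ≤ 160 * (m : ℝ) ^ 2 := by
    have hn' : (n : ℝ) ≤ 20 * m := by exact_mod_cast hn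
    have le_sq : (m : ℝ) ≤ m ^ 2 := by exact_mod_cast Nat.le_self_pow two_ne_zero m
    have log_two_lt := Real.log_two_lt_d9
    rw [Nat.cast_pow, Real.log_pow]
    push_cast
    nlinarith
  rw [mul_div_assoc', Nat.cast_pow, Nat.cast_ofNat]
  gcongr
  exact (primeSum_le_log_mul_progressionSum hf _ x).trans
    (mul_le_mul_of_nonneg_right log_le (progressionSum_nonneg hf _ x))

lemma primeSum_div_le_of_ge (hf : ∀ x, 0 ≤ f x) (hm : 2 ≤ m) (hn : 20 ≤ n) (x : ℤ) :
    primeSum f (2 ^ n) x / 2 ^ n ≤ primeSum f (2 ^ (n / 20)) x / 2 ^ n + 160 * m ^ 2 *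
      ∑ W ∈ sieveSupport (primesUpTo (2 ^ (n / 20)) \ primesUpTo (2 ^ m)) ((2 ^ (n / 20)) ^ 2),
        4 ^ #W / (modulus W : ℝ) * |ramanujanAvg W (2 ^ n) f x| := by
  set r := n / 20
  set P := primesUpTo (2 ^ r) \ primesUpTo (2 ^ m)
  have log_two_pos : 0 < Real.log 2 := Real.log_pos one_lt_two
  have mass_ge := mul_log_two_le_sieveMass hm r
  have mass_pos : 0 < sieveMass P (2 ^ r) := by
    refine pos_of_mul_pos_right (lt_of_lt_of_le ?_ mass_ge) (by positivity)
    have : 0 < r := by lia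
    positivity
  have log_div_le : Real.log (2 ^ n : ℕ) / sieveMass P (2 ^ r) ≤ 160 * m ^ 2 := by
    have hnr : (n : ℝ) ≤ 40 * r := by exact_mod_cast (by lia : n ≤ 40 * r)
    rw [div_le_iff₀ mass_pos, Nat.cast_pow, Real.log_pow]
    push_cast
    nlinarith
  have sieve := sum_log_mul_div_le_sum_ramanujanAvg (N := 2 ^ n)
    (fun p hp => (mem_primesUpTo_sdiff.1 hp).2.2) (fun p hp => (mem_primesUpTo_sdiff.1 hp).2.1)
    mass_pos hf x
  calc primeSum f (2 ^ n) x / 2 ^ n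
      ≤ (primeSum f (2 ^ r) x +
          ∑ p ∈ primesUpTo (2 ^ n) with 2 ^ r < p, Real.log p * f (x + p)) / 2 ^ n := by
        gcongr
        exact primeSum_le_add_sum_filter hf _ _ x
    _ ≤ _ := by
        rw [add_div]
        gcongr
        push_cast at sieve
        refine sieve.trans (mul_le_mul_of_nonneg_right ?_ (sum_nonneg fun _ _ => by positivity))
        simpa using log_div_le

end PrimeSum

section BlockMaximal

variable {m n : ℕ} {f : ℤ → ℝ}

lemma sum_dyadicBlock_le_blockMaximal {s : ℕ} (hs : 9 * s ≤ n) (m : ℕ) (f : ℤ → ℝ) (x : ℤ) :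
    ∑ W ∈ dyadicBlock m s, ENNReal.ofReal (4 ^ #W / modulus W) * ‖ramanujanAvg W (2 ^ n) f x‖ₑ ≤
      blockMaximal m s f x := by
  have pow_eq : (2 ^ s) ^ 9 * 2 ^ (n - 9 * s) = 2 ^ n := by
    rw [← pow_mul, ← pow_add, mul_comm s, Nat.add_sub_cancel' hs]
  refine le_trans (le_of_eq ?_) (le_iSup _ (n - 9 * s))
  rw [pow_eq]

/- The set `∅` contributes the average of `f`; the others are distributed over the blocks. -/
lemma ofReal_sum_sieveSupport_le {r : ℕ} (hr : 20 * r ≤ n) (m : ℕ) (f : ℤ → ℝ) (x : ℤ) :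
    ENNReal.ofReal (∑ W ∈ sieveSupport (primesUpTo (2 ^ r) \ primesUpTo (2 ^ m)) ((2 ^ r) ^ 2),
        4 ^ #W / (modulus W : ℝ) * |ramanujanAvg W (2 ^ n) f x|) ≤
      ‖progressionSum 1 f (2 ^ n) x / (2 ^ n : ℕ)‖ₑ + ∑' s, blockMaximal m s f x := by
  set S := sieveSupport (primesUpTo (2 ^ r) \ primesUpTo (2 ^ m)) ((2 ^ r) ^ 2)
  set g : Finset ℕ → ℝ≥0∞ := fun W =>
    ENNReal.ofReal (4 ^ #W / modulus W) * ‖ramanujanAvg W (2 ^ n) f x‖ₑ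
  have empty_mem : ∅ ∈ S := mem_sieveSupport.2 ⟨empty_subset _, Nat.one_le_pow _ _ (by positivity)⟩
  have mem_block : ∀ W ∈ S.erase ∅, W ∈ dyadicBlock m (Nat.log 2 (modulus W)) := fun W hW => by
    obtain ⟨hne, hW⟩ := mem_erase.1 hW
    have hprime : ∀ p ∈ W, 2 ^ m < p ∧ p.Prime := fun p hp =>
      have := mem_primesUpTo_sdiff.1 ((mem_sieveSupport.1 hW).1 hp)
      ⟨this.1, this.2.2⟩
    exact mem_dyadicBlock.2 ⟨hprime, nonempty_iff_ne_empty.2 hne,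
      Nat.pow_log_le_self 2 (modulus_pos fun p hp => (hprime p hp).2).ne',
      Nat.lt_pow_succ_log_self one_lt_two _⟩
  have log_mem : ∀ W ∈ S.erase ∅, Nat.log 2 (modulus W) ∈ range (2 * r + 1) := fun W hW =>
    mem_range.2 <| Nat.lt_succ_iff.2 <|
      calc Nat.log 2 (modulus W) ≤ Nat.log 2 ((2 ^ r) ^ 2) :=
            Nat.log_mono_right (mem_sieveSupport.1 (mem_of_mem_erase hW)).2
        _ = 2 * r := by rw [← pow_mul, Nat.log_pow one_lt_two, mul_comm]
  calc _ = ∑ W ∈ S, g W := by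
        rw [ENNReal.ofReal_sum_of_nonneg fun _ _ => by positivity]
        refine sum_congr rfl fun W _ => ?_
        simp only [g, Real.enorm_eq_ofReal_abs,
          ENNReal.ofReal_mul (div_nonneg (pow_nonneg zero_le_four _) (Nat.cast_nonneg _))]
    _ = g ∅ + ∑ s ∈ range (2 * r + 1), ∑ W ∈ S.erase ∅ with Nat.log 2 (modulus W) = s, g W := by
        rw [← add_sum_erase _ _ empty_mem, sum_fiberwise_of_maps_to log_mem]
    _ ≤ _ := by
        refine add_le_add (by simp [g, modulus, ramanujanAvg_empty])
          (le_trans (sum_le_sum fun s hs => ?_) (ENNReal.sum_le_tsum (range (2 * r + 1))))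
        refine (sum_le_sum_of_subset fun W hW => ?_).trans
          (sum_dyadicBlock_le_blockMaximal (by rw [mem_range] at hs; lia) m f x)
        rw [mem_filter] at hW
        exact hW.2 ▸ mem_block W hW.1

lemma enorm_weightedPrimeAvg_le (hm : 2 ≤ m) (hn : 1 ≤ n) (f : ℤ → ℂ) (x : ℤ) :
    ‖weightedPrimeAvg f (2 ^ n) x‖ₑ ≤
      ENNReal.ofReal (2 ^ 16 * 160 * m ^ 2 *
        (progressionSum 1 (fun y => ‖f y‖) (2 ^ n) x / (2 ^ n : ℕ))) +
      ENNReal.ofReal (2 ^ 16) * primeError m (fun y => ‖f y‖) x := by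
  set F : ℤ → ℝ := fun y => ‖f y‖
  have hF : ∀ y, 0 ≤ F y := fun y => norm_nonneg _
  have avg_nonneg : 0 ≤ progressionSum 1 F (2 ^ n) x / (2 ^ n : ℕ) :=
    div_nonneg (progressionSum_nonneg hF _ x) (Nat.cast_nonneg _)
  suffices h : ENNReal.ofReal (primeSum F (2 ^ n) x / 2 ^ n) ≤
      ENNReal.ofReal (160 * m ^ 2 * (progressionSum 1 F (2 ^ n) x / (2 ^ n : ℕ))) +
        primeError m F x by
    rw [mul_assoc (2 ^ 16 : ℝ), mul_assoc (2 ^ 16 : ℝ), ENNReal.ofReal_mul (by positivity),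
      ← mul_add, ← ofReal_norm]
    refine (ENNReal.ofReal_le_ofReal (norm_weightedPrimeAvg_le hn f x)).trans ?_
    rw [ENNReal.ofReal_mul (by positivity)]
    gcongr
  rcases le_total n (20 * m) with h | h
  · exact (ENNReal.ofReal_le_ofReal (primeSum_div_le_of_le hF h x)).trans le_self_add
  · have small_le : ENNReal.ofReal (primeSum F (2 ^ (n / 20)) x / 2 ^ n) ≤
        ∑' n : ℕ, if 20 * m ≤ n then ‖primeSum F (2 ^ (n / 20)) x / 2 ^ n‖ₑ else 0 := by
      refine le_trans ?_ (ENNReal.le_tsum n)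
      rw [if_pos h, Real.enorm_eq_ofReal_abs]
      exact ENNReal.ofReal_le_ofReal (le_abs_self _)
    have large_le := ofReal_sum_sieveSupport_le (Nat.mul_div_le n 20) m F x
    refine (ENNReal.ofReal_le_ofReal (primeSum_div_le_of_ge hF hm (by lia) x)).trans
      (ENNReal.ofReal_add_le.trans ?_)
    rw [Real.enorm_of_nonneg avg_nonneg] at large_le
    rw [ENNReal.ofReal_mul (p := 160 * (m : ℝ) ^ 2) (by positivity),
      ENNReal.ofReal_mul (p := 160 * (m : ℝ) ^ 2) (by positivity)]
    refine (add_le_add small_le (mul_le_mul' le_rfl large_le)).trans_eq ?_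
    rw [primeError, mul_add, add_left_comm]

end BlockMaximal

section PrimeError

variable {m s : ℕ} {ρ : ℝ} {f : ℤ → ℝ}

lemma lt_one_of_pow_eight_eq (hρ : ρ ^ 8 = 1 / 2) : ρ < 1 :=
  lt_of_pow_lt_pow_left₀ 8 zero_le_one (by norm_num [hρ])

lemma pow_div_sqrt_two_pow_le (hρ0 : 0 < ρ) (hρ : ρ ^ 8 = 1 / 2) (s : ℕ) :
    ((2 : ℝ) ^ (s / 24)) ^ 4 / √(2 ^ s) ≤ ρ ^ (2 * s) := by
  have pow_four : (ρ ^ (2 * s)) ^ 4 = (1 / 2) ^ s := by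
    rw [← hρ, ← pow_mul, ← pow_mul]
    ring_nf
  have sqrt_pow_four : √((2 : ℝ) ^ s) ^ 4 = 2 ^ s * 2 ^ s := by
    rw [show (4 : ℕ) = 2 * 2 from rfl, pow_mul, Real.sq_sqrt (by positivity), sq]
  rw [← pow_le_pow_iff_left₀ (by positivity) (by positivity) four_ne_zero, pow_four, div_pow,
    sqrt_pow_four, div_le_iff₀ (by positivity), ← mul_assoc, ← mul_pow,
    one_div_mul_cancel two_ne_zero, one_pow, one_mul, ← pow_mul, ← pow_mul]
  exact pow_le_pow_right₀ one_le_two (by lia)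

lemma l2Norm_blockMaximal_le (hm : 24 ≤ m) (hρ0 : 0 < ρ) (hρ : ρ ^ 8 = 1 / 2)
    (hf : f.support.Finite) (s : ℕ) :
    l2Norm (blockMaximal m s f) ≤ ENNReal.ofReal (42 * (ρ ^ m * ρ ^ s)) * l2Norm f := by
  rcases lt_or_ge s m with h | h
  · have : blockMaximal m s f = fun _ => 0 := by
      ext x
      simp [blockMaximal, dyadicBlock_eq_empty h]
    simp [this, l2Norm]
  · have two_pow_card_le : ∀ W ∈ dyadicBlock m s, (2 : ℝ) ^ #W ≤ 2 ^ (s / 24) := fun W hW =>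
      pow_le_pow_right₀ one_le_two <| (Nat.le_div_iff_mul_le (by norm_num)).2 <| by
        have := mul_card_le_of_mem_dyadicBlock hW
        nlinarith
    have bound := l2Norm_iSup_sum_ramanujanAvg_le (P := 2 ^ s) (by positivity)
      (fun W => prime_of_mem_dyadicBlock) (fun W hW => (mem_dyadicBlock.1 hW).2.2.1)
      (fun W hW => ((mem_dyadicBlock.1 hW).2.2.2.trans_eq (pow_succ' 2 s)).le)
      (card_dyadicBlock_le m s) (one_le_pow₀ one_le_two) two_pow_card_le hf
    refine bound.trans ?_
    push_cast
    rw [mul_div_assoc]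
    gcongr
    refine (pow_div_sqrt_two_pow_le hρ0 hρ s).trans ?_
    rw [← pow_add]
    exact pow_le_pow_of_le_one hρ0.le (lt_one_of_pow_eight_eq hρ).le (by lia)

lemma sum_primesUpTo_abs_log_div_le (N : ℕ) {X : ℝ} (hX : 0 < X) :
    ∑ p ∈ primesUpTo N, |Real.log p / X| ≤ N ^ 2 / X := by
  have card_le : #(primesUpTo N) ≤ N := by
    have subset : primesUpTo N ⊆ Ioc 0 N := fun p hp =>
      mem_Ioc.2 ⟨(mem_primesUpTo.1 hp).2.pos, (mem_primesUpTo.1 hp).1⟩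
    simpa using card_le_card subset
  have term_le : ∀ p ∈ primesUpTo N, |Real.log p / X| ≤ N / X := fun p hp => by
    rw [abs_of_nonneg (div_nonneg (Real.log_natCast_nonneg p) hX.le)]
    gcongr
    exact (Real.log_le_self (Nat.cast_nonneg p)).trans (by exact_mod_cast (mem_primesUpTo.1 hp).1)
  calc _ ≤ #(primesUpTo N) • (N / X) := sum_le_card_nsmul _ _ _ term_le
    _ ≤ N * (N / X) := by
        rw [nsmul_eq_mul]
        gcongr
    _ = N ^ 2 / X := by rw [sq, mul_div_assoc]

lemma l2Norm_primeSum_div_le {n : ℕ} (hρ0 : 0 < ρ) (hρ : ρ ^ 8 = 1 / 2) (hn : 20 * m ≤ n) :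
    l2Norm (fun x => primeSum f (2 ^ (n / 20)) x / 2 ^ n) ≤
      ENNReal.ofReal (ρ ^ m * ρ ^ n) * l2Norm f := by
  have pow_eight : (ρ ^ m * ρ ^ n) ^ 8 = ((2 : ℝ) ^ (m + n))⁻¹ := by
    rw [← pow_add, ← pow_mul, mul_comm, pow_mul, hρ, one_div, inv_pow]
  have weight_le : ((2 ^ (n / 20) : ℕ) : ℝ) ^ 2 / 2 ^ n ≤ ρ ^ m * ρ ^ n := by
    rw [← pow_le_pow_iff_left₀ (by positivity) (by positivity) (by norm_num : (8 : ℕ) ≠ 0),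
      pow_eight, Nat.cast_pow, Nat.cast_ofNat, div_pow, ← pow_mul, ← pow_mul, ← pow_mul,
      div_le_iff₀ (by positivity), ← div_eq_inv_mul, le_div_iff₀ (by positivity), ← pow_add]
    exact pow_le_pow_right₀ one_le_two (by lia)
  calc l2Norm (fun x => primeSum f (2 ^ (n / 20)) x / 2 ^ n)
      = l2Norm fun x => ∑ p ∈ primesUpTo (2 ^ (n / 20)), Real.log p / 2 ^ n * f (x + (p : ℕ)) := by
        simp only [primeSum, sum_div, div_mul_eq_mul_div]
    _ ≤ _ := (l2Norm_sum_mul_shift_le _ (fun p : ℕ => Real.log p / 2 ^ n) _ f).trans <| by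
        gcongr
        exact (sum_primesUpTo_abs_log_div_le _ (by positivity)).trans weight_le

lemma l2Norm_tsum_le_of_geometric {F : ℕ → ℤ → ℝ≥0∞} {c : ℝ} {a : ℝ≥0∞} (hc : 0 ≤ c)
    (hρ0 : 0 ≤ ρ) (hρ1 : ρ < 1) (h : ∀ n, l2Norm (F n) ≤ ENNReal.ofReal (c * ρ ^ n) * a) :
    l2Norm (fun x => ∑' n, F n x) ≤ ENNReal.ofReal (c / (1 - ρ)) * a :=
  calc l2Norm (fun x => ∑' n, F n x) ≤ ∑' n, ENNReal.ofReal (c * ρ ^ n) * a :=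
        (l2Norm_tsum_le F).trans (ENNReal.tsum_le_tsum h)
    _ = ENNReal.ofReal (c / (1 - ρ)) * a := by
        rw [ENNReal.tsum_mul_right, ← ENNReal.ofReal_tsum_of_nonneg (fun n => by positivity)
          ((summable_geometric_of_lt_one hρ0 hρ1).mul_left _), tsum_mul_left,
          tsum_geometric_of_lt_one hρ0 hρ1, div_eq_mul_inv]

lemma l2Norm_primeError_le (hm : 24 ≤ m) (hρ0 : 0 < ρ) (hρ : ρ ^ 8 = 1 / 2)
    (hf : f.support.Finite) :
    l2Norm (primeError m f) ≤ ENNReal.ofReal (6721 / (1 - ρ) * (m ^ 2 * ρ ^ m)) * l2Norm f := by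
  have hρ1 := lt_one_of_pow_eight_eq hρ
  have : 0 < 1 - ρ := sub_pos.2 hρ1
  have small_le : l2Norm (fun x => ∑' n : ℕ,
      if 20 * m ≤ n then ‖primeSum f (2 ^ (n / 20)) x / 2 ^ n‖ₑ else 0) ≤
        ENNReal.ofReal (ρ ^ m / (1 - ρ)) * l2Norm f := by
    refine l2Norm_tsum_le_of_geometric (by positivity) hρ0.le hρ1 fun n => ?_
    split_ifs with h
    · exact l2Norm_primeSum_div_le hρ0 hρ h
    · simp [l2Norm]
  have large_le : l2Norm (fun x => ∑' s, blockMaximal m s f x) ≤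
      ENNReal.ofReal (42 * ρ ^ m / (1 - ρ)) * l2Norm f :=
    l2Norm_tsum_le_of_geometric (by positivity) hρ0.le hρ1 fun s =>
      (l2Norm_blockMaximal_le hm hρ0 hρ hf s).trans_eq (by rw [mul_assoc])
  have one_le : (1 : ℝ) ≤ m ^ 2 := by exact_mod_cast Nat.one_le_pow 2 m (by lia)
  calc l2Norm (primeError m f)
      ≤ ENNReal.ofReal (ρ ^ m / (1 - ρ)) * l2Norm f +
          ENNReal.ofReal (160 * m ^ 2) * (ENNReal.ofReal (42 * ρ ^ m / (1 - ρ)) * l2Norm f) := by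
        refine (l2Norm_add_le _ _).trans (add_le_add small_le ?_)
        rw [l2Norm_const_mul]
        gcongr
    _ = ENNReal.ofReal ((1 + 6720 * m ^ 2) * (ρ ^ m / (1 - ρ))) * l2Norm f := by
        rw [← mul_assoc, ← ENNReal.ofReal_mul (by positivity), ← add_mul,
          ← ENNReal.ofReal_add (by positivity) (by positivity)]
        ring_nf
    _ ≤ ENNReal.ofReal ((m ^ 2 + 6720 * m ^ 2) * (ρ ^ m / (1 - ρ))) * l2Norm f := by gcongr
    _ = _ := by ring_nf

end PrimeError

/-! ### The decomposition -/

/-- The average over the primes up to `2 ^ n` where it is at most a multiple `m ^ 2` of the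
one-sided average of `‖f‖` over an interval of length `2 ^ n`, and zero elsewhere. -/
noncomputable def tamePart (m n : ℕ) (f : ℤ → ℂ) (x : ℤ) : ℂ :=
  if ‖weightedPrimeAvg f (2 ^ n) x‖ ≤
      2 ^ 17 * 160 * m ^ 2 * (progressionSum 1 (fun y => ‖f y‖) (2 ^ n) x / (2 ^ n : ℕ))
  then weightedPrimeAvg f (2 ^ n) x else 0

section Decomposition

variable {m : ℕ} {f : ℤ → ℂ}

lemma sqrt_tsum_sq_iSup_norm_le {E : Type*} [NormedAddCommGroup E] {b : ℕ → ℤ → E}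
    {Φ : ℤ → ℝ≥0∞} {F : ℤ → ℝ} {C : ℝ} (hF : F.support.Finite) (hC : 0 ≤ C)
    (hb : ∀ n, 1 ≤ n → ∀ x, ‖b n x‖ₑ ≤ Φ x) (hΦ : l2Norm Φ ≤ ENNReal.ofReal C * l2Norm F) :
    √(∑' x : ℤ, (⨆ (n : ℕ) (_ : 1 ≤ n), ‖b n x‖) ^ 2) ≤ C * √(∑' x : ℤ, F x ^ 2) := by
  set G : ℤ → ℝ := fun x => ⨆ (n : ℕ) (_ : 1 ≤ n), ‖b n x‖
  have G_nonneg : ∀ x, 0 ≤ G x := fun x =>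
    Real.iSup_nonneg fun n => Real.iSup_nonneg fun _ => norm_nonneg _
  have G_le : ∀ x, ENNReal.ofReal (G x) ≤ Φ x := fun x => by
    rcases eq_or_ne (Φ x) ⊤ with hx | hx
    · exact hx ▸ le_top
    · refine ENNReal.ofReal_le_of_le_toReal <| Real.iSup_le (fun n => Real.iSup_le (fun hn => ?_)
        ENNReal.toReal_nonneg) ENNReal.toReal_nonneg
      exact (ENNReal.ofReal_le_iff_le_toReal hx).1 (ofReal_norm (b n x) ▸ hb n hn x)
  have rhs_nonneg : 0 ≤ C ^ 2 * ∑' x, F x ^ 2 :=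
    mul_nonneg (sq_nonneg C) (tsum_nonneg fun _ => sq_nonneg _)
  have sum_le : ∑' x, G x ^ 2 ≤ C ^ 2 * ∑' x, F x ^ 2 := by
    by_cases hG : Summable fun x => G x ^ 2
    · refine (ENNReal.ofReal_le_ofReal_iff rhs_nonneg).1 ?_
      calc ENNReal.ofReal (∑' x, G x ^ 2) = ∑' x, ENNReal.ofReal (G x) ^ 2 := by
            rw [ENNReal.ofReal_tsum_of_nonneg (fun _ => sq_nonneg _) hG]
            exact tsum_congr fun x => ENNReal.ofReal_pow (G_nonneg x) 2
        _ ≤ l2Norm Φ ^ 2 := by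
            rw [l2Norm_sq]
            exact ENNReal.tsum_le_tsum fun x => pow_le_pow_left₀ zero_le (G_le x) 2
        _ ≤ (ENNReal.ofReal C * l2Norm F) ^ 2 := by gcongr
        _ = ENNReal.ofReal (C ^ 2 * ∑' x, F x ^ 2) := by
            rw [mul_pow, l2Norm_sq_eq_ofReal hF, ENNReal.ofReal_mul (sq_nonneg C),
              ENNReal.ofReal_pow hC]
    · rwa [tsum_eq_zero_of_not_summable hG]
  calc √(∑' x, G x ^ 2) ≤ √(C ^ 2 * ∑' x, F x ^ 2) := Real.sqrt_le_sqrt sum_le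
    _ = C * √(∑' x, F x ^ 2) := by rw [Real.sqrt_mul (sq_nonneg C), Real.sqrt_sq hC]

lemma finite_support_norm (hf : f.support.Finite) : (fun y => ‖f y‖).support.Finite :=
  hf.subset fun _ hx hfx => hx (by simp [hfx])

lemma norm_tamePart_le (m n : ℕ) (f : ℤ → ℂ) (x : ℤ) : ‖tamePart m n f x‖ ≤
    2 ^ 17 * 160 * m ^ 2 * (progressionSum 1 (fun y => ‖f y‖) (2 ^ n) x / (2 ^ n : ℕ)) := by
  rw [tamePart]
  split_ifs with h
  · exact h
  · rw [norm_zero]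
    exact mul_nonneg (by positivity)
      (div_nonneg (progressionSum_nonneg (fun _ => norm_nonneg _) _ x) (Nat.cast_nonneg _))

lemma tamePart_weak_type (hf : f.support.Finite) (hm : 0 < m) {l : ℝ} (hl : 0 < l) :
    {x : ℤ | ∃ n : ℕ, 1 ≤ n ∧ l < ‖tamePart m n f x‖}.Finite ∧
      l * ({x : ℤ | ∃ n : ℕ, 1 ≤ n ∧ l < ‖tamePart m n f x‖}.ncard : ℝ) ≤
        2 ^ 17 * 160 * m ^ 2 * ∑' y, ‖f y‖ := by
  set K : ℝ := 2 ^ 17 * 160 * m ^ 2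
  have hK : 0 < K := by positivity
  obtain ⟨finite, weak⟩ := progressionSum_weak_type (d := 1) (l := l / K)
    (fun y => norm_nonneg (f y)) (finite_support_norm hf) (by positivity)
  have subset : {x : ℤ | ∃ n : ℕ, 1 ≤ n ∧ l < ‖tamePart m n f x‖} ⊆
      {x | ∃ J : ℕ, l / K * J < progressionSum 1 (fun y => ‖f y‖) J x} := by
    rintro x ⟨n, -, hx⟩
    have lt_average := hx.trans_le (norm_tamePart_le m n f x)
    refine ⟨2 ^ n, ?_⟩
    rwa [mul_div_assoc', lt_div_iff₀ (by positivity), ← div_lt_iff₀' hK, mul_div_right_comm]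
      at lt_average
  refine ⟨finite.subset subset, ?_⟩
  rw [div_mul_eq_mul_div, div_le_iff₀' hK] at weak
  refine le_trans ?_ weak
  gcongr

/- Off the tame part, half of the average is absorbed by the interval average it exceeds. -/
lemma enorm_weightedPrimeAvg_sub_tamePart_le (hm : 2 ≤ m) {n : ℕ} (hn : 1 ≤ n) (f : ℤ → ℂ)
    (x : ℤ) : ‖weightedPrimeAvg f (2 ^ n) x - tamePart m n f x‖ₑ ≤
      ENNReal.ofReal (2 ^ 17) * primeError m (fun y => ‖f y‖) x := by
  rw [tamePart]
  split_ifs with h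
  · simp
  · set a := ENNReal.ofReal (2 ^ 16 * 160 * m ^ 2 *
      (progressionSum 1 (fun y => ‖f y‖) (2 ^ n) x / (2 ^ n : ℕ)))
    set e := primeError m (fun y => ‖f y‖) x
    set w := weightedPrimeAvg f (2 ^ n) x
    have le_add : ‖w‖ₑ ≤ a + ENNReal.ofReal (2 ^ 16) * e := enorm_weightedPrimeAvg_le hm hn f x
    have two_mul_le : 2 * a ≤ ‖w‖ₑ := by
      rw [← ENNReal.ofReal_ofNat 2, ← ENNReal.ofReal_mul zero_le_two, ← ofReal_norm]
      refine ENNReal.ofReal_le_ofReal ((le_of_eq ?_).trans (not_le.1 h).le)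
      ring
    rw [sub_zero]
    refine ENNReal.le_of_add_le_add_left (enorm_ne_top (x := w)) ?_
    calc ‖w‖ₑ + ‖w‖ₑ ≤ (a + ENNReal.ofReal (2 ^ 16) * e) + (a + ENNReal.ofReal (2 ^ 16) * e) :=
          add_le_add le_add le_add
      _ = 2 * a + ENNReal.ofReal (2 ^ 17) * e := by
          rw [pow_succ (2 : ℝ) 16, mul_two (2 ^ 16 : ℝ), ENNReal.ofReal_add (by positivity)
            (by positivity)]
          ring
      _ ≤ ‖w‖ₑ + ENNReal.ofReal (2 ^ 17) * e := by gcongr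

lemma sqrt_tsum_sq_iSup_sub_tamePart_le {ρ : ℝ} (hm : 24 ≤ m) (hρ0 : 0 < ρ) (hρ : ρ ^ 8 = 1 / 2)
    (hf : f.support.Finite) :
    √(∑' x : ℤ, (⨆ (n : ℕ) (_ : 1 ≤ n), ‖weightedPrimeAvg f (2 ^ n) x - tamePart m n f x‖) ^ 2) ≤
      2 ^ 17 * (6721 / (1 - ρ) * (m ^ 2 * ρ ^ m)) * √(∑' x : ℤ, ‖f x‖ ^ 2) := by
  have sub_pos : 0 < 1 - ρ := sub_pos.2 (lt_one_of_pow_eight_eq hρ)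
  refine sqrt_tsum_sq_iSup_norm_le (finite_support_norm hf) (by positivity)
    (fun n hn x => enorm_weightedPrimeAvg_sub_tamePart_le (m := m) (by lia) hn f x) ?_
  rw [l2Norm_const_mul, ENNReal.ofReal_mul (by positivity), mul_assoc]
  gcongr
  exact l2Norm_primeError_le hm hρ0 hρ (finite_support_norm hf)

lemma exp_neg_log_two_div_eight_pow : Real.exp (-(Real.log 2 / 8)) ^ 8 = 1 / 2 := by
  rw [← Real.exp_nat_mul, show (8 : ℕ) * -(Real.log 2 / 8) = -Real.log 2 by push_cast; ring,
    Real.exp_neg, Real.exp_log two_pos, one_div]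

lemma exists_sqrt_tsum_sq_iSup_weightedPrimeAvg_le : ∃ C : ℝ, 0 < C ∧
    ∀ f : ℤ → ℂ, f.support.Finite →
      √(∑' x : ℤ, (⨆ (n : ℕ) (_ : 1 ≤ n), ‖weightedPrimeAvg f (2 ^ n) x‖) ^ 2) ≤
        C * √(∑' x : ℤ, ‖f x‖ ^ 2) := by
  set ρ := Real.exp (-(Real.log 2 / 8))
  have sub_pos : 0 < 1 - ρ := sub_pos.2 (lt_one_of_pow_eight_eq exp_neg_log_two_div_eight_pow)
  set K : ℝ := 2 ^ 16 * 160 * (24 : ℕ) ^ 2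
  set L : ℝ := 6721 / (1 - ρ) * ((24 : ℕ) ^ 2 * ρ ^ 24)
  refine ⟨K * 2 + 2 ^ 16 * L, by positivity, fun f hf => ?_⟩
  refine sqrt_tsum_sq_iSup_norm_le (finite_support_norm hf) (by positivity)
    (Φ := fun x => ENNReal.ofReal K * progressionMaximal 1 (fun y => ‖f y‖) x +
      ENNReal.ofReal (2 ^ 16) * primeError 24 (fun y => ‖f y‖) x) (fun n hn x => ?_) ?_
  · refine (enorm_weightedPrimeAvg_le (m := 24) (by lia) hn f x).trans ?_
    rw [ENNReal.ofReal_mul (by positivity)]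
    gcongr
    exact le_iSup (fun J : ℕ => ENNReal.ofReal (progressionSum 1 (fun y => ‖f y‖) J x / J)) (2 ^ n)
  · refine (l2Norm_add_le _ _).trans ?_
    rw [l2Norm_const_mul, l2Norm_const_mul, ENNReal.ofReal_add (by positivity) (by positivity),
      ENNReal.ofReal_mul (p := K) (by positivity),
      ENNReal.ofReal_mul (p := (2 : ℝ) ^ 16) (by positivity), ENNReal.ofReal_ofNat 2, add_mul,
      mul_assoc, mul_assoc]
    gcongr
    · exact l2Norm_progressionMaximal_le (fun y => norm_nonneg (f y)) (finite_support_norm hf)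
    · exact l2Norm_primeError_le le_rfl (Real.exp_pos _) exp_neg_log_two_div_eight_pow
        (finite_support_norm hf)

lemma sq_mul_exp_neg_pow_le {L : ℝ} (hL : 0 < L) {s : ℝ} (hs : s ≤ m + 1) :
    m ^ 2 * Real.exp (-L) ^ m ≤ 8 / L ^ 2 * Real.exp (L / 2) * Real.exp (-(L / 2) * s) := by
  have quadratic_le := Real.quadratic_le_exp_of_nonneg (x := m * L / 2) (by positivity)
  have sq_le : (m : ℝ) ^ 2 ≤ 8 / L ^ 2 * Real.exp (m * L / 2) := by
    have : 0 ≤ m * L / 2 := by positivity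
    rw [div_mul_eq_mul_div, le_div_iff₀ (by positivity)]
    nlinarith
  calc m ^ 2 * Real.exp (-L) ^ m ≤ 8 / L ^ 2 * Real.exp (m * L / 2) * Real.exp (-L) ^ m := by gcongr
    _ = 8 / L ^ 2 * Real.exp (-(m * L / 2)) := by
        rw [← Real.exp_nat_mul, mul_assoc, ← Real.exp_add]
        ring_nf
    _ ≤ 8 / L ^ 2 * Real.exp (L / 2 + -(L / 2) * s) := by
        gcongr
        nlinarith
    _ = _ := by rw [Real.exp_add, mul_assoc]

lemma exists_sqrt_tsum_sq_iSup_weightedPrimeAvg_le_exp : ∃ C : ℝ, 0 < C ∧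
    ∀ t < (576 : ℝ), ∀ f : ℤ → ℂ, f.support.Finite →
      √(∑' x : ℤ, (⨆ (n : ℕ) (_ : 1 ≤ n), ‖weightedPrimeAvg f (2 ^ n) x‖) ^ 2) ≤
        C * Real.exp (-(Real.log 2 / 16) * √t) * √(∑' x : ℤ, ‖f x‖ ^ 2) := by
  obtain ⟨C, hC, bound⟩ := exists_sqrt_tsum_sq_iSup_weightedPrimeAvg_le
  refine ⟨C * Real.exp (Real.log 2 / 16 * 24), by positivity, fun t ht f hf => ?_⟩
  refine (bound f hf).trans ?_
  have sqrt_le : √t ≤ 24 := Real.sqrt_le_iff.2 ⟨by norm_num, by linarith⟩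
  have one_le_exp : 1 ≤ Real.exp (Real.log 2 / 16 * 24 + -(Real.log 2 / 16) * √t) := by
    have : 0 < Real.log 2 / 16 := div_pos (Real.log_pos one_lt_two) (by norm_num)
    rw [Real.one_le_exp_iff]
    nlinarith
  gcongr
  rw [mul_assoc, ← Real.exp_add]
  exact le_mul_of_one_le_right hC.le one_le_exp

lemma exists_sqrt_tsum_sq_iSup_sub_tamePart_le_exp : ∃ C : ℝ, 0 < C ∧
    ∀ t ≥ (576 : ℝ), ∀ f : ℤ → ℂ, f.support.Finite →
      √(∑' x : ℤ, (⨆ (n : ℕ) (_ : 1 ≤ n),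
          ‖weightedPrimeAvg f (2 ^ n) x - tamePart ⌊√t⌋₊ n f x‖) ^ 2) ≤
        C * Real.exp (-(Real.log 2 / 16) * √t) * √(∑' x : ℤ, ‖f x‖ ^ 2) := by
  set L := Real.log 2 / 8
  have hL : 0 < L := div_pos (Real.log_pos one_lt_two) (by norm_num)
  have sub_pos : 0 < 1 - Real.exp (-L) :=
    sub_pos.2 (lt_one_of_pow_eight_eq exp_neg_log_two_div_eight_pow)
  refine ⟨2 ^ 17 * (6721 / (1 - Real.exp (-L)) * (8 / L ^ 2 * Real.exp (L / 2))), by positivity,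
    fun t ht f hf => ?_⟩
  have le_floor : 24 ≤ ⌊√t⌋₊ := Nat.le_floor (Real.le_sqrt_of_sq_le (by norm_num; exact ht))
  refine (sqrt_tsum_sq_iSup_sub_tamePart_le le_floor (Real.exp_pos _)
    exp_neg_log_two_div_eight_pow hf).trans ?_
  have decay := sq_mul_exp_neg_pow_le hL (Nat.lt_floor_add_one √t).le
  rw [show Real.log 2 / 16 = L / 2 by ring]
  refine mul_le_mul_of_nonneg_right ?_ (Real.sqrt_nonneg _)
  calc 2 ^ 17 * (6721 / (1 - Real.exp (-L)) * (⌊√t⌋₊ ^ 2 * Real.exp (-L) ^ ⌊√t⌋₊))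
      ≤ 2 ^ 17 * (6721 / (1 - Real.exp (-L)) *
          (8 / L ^ 2 * Real.exp (L / 2) * Real.exp (-(L / 2) * √t))) := by gcongr
    _ = _ := by ring

end Decomposition

end PrimeAverages

/-- For each `t > 0` the operators `ℳ_{2^n}` split as `A_n^t + B_n^t`, where the maximal
function of `A_n^t` has weak `ℓ¹` norm `≤ C t ‖f‖₁` and the maximal function of `B_n^t`
has `ℓ²` norm `≤ C exp(−c√t) ‖f‖₂`. -/
theorem stmt_17 :
    ∃ C c : ℝ, 0 < C ∧ 0 < c ∧
      ∀ t : ℝ, 0 < t →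
        ∃ A B : ℕ → (ℤ → ℂ) → (ℤ → ℂ),
          ∀ (f : ℤ → ℂ), (Function.support f).Finite →
            (∀ n : ℕ, 1 ≤ n → ∀ x : ℤ, weightedPrimeAvg f (2 ^ n) x = A n f x + B n f x) ∧
            (∀ l : ℝ, 0 < l →
              {x : ℤ | ∃ n : ℕ, 1 ≤ n ∧ l < ‖A n f x‖}.Finite ∧
              l * (({x : ℤ | ∃ n : ℕ, 1 ≤ n ∧ l < ‖A n f x‖}.ncard : ℝ)) ≤
                C * t * ∑' m : ℤ, ‖f m‖) ∧
            Real.sqrt (∑' x : ℤ, (⨆ (n : ℕ) (_ : 1 ≤ n), ‖B n f x‖) ^ 2) ≤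
              C * Real.exp (-c * Real.sqrt t) * Real.sqrt (∑' x : ℤ, ‖f x‖ ^ 2) := by
  obtain ⟨C₁, hC₁, l2_small⟩ := PrimeAverages.exists_sqrt_tsum_sq_iSup_weightedPrimeAvg_le_exp
  obtain ⟨C₂, hC₂, l2_large⟩ := PrimeAverages.exists_sqrt_tsum_sq_iSup_sub_tamePart_le_exp
  refine ⟨2 ^ 17 * 160 + C₁ + C₂, Real.log 2 / 16, by positivity,
    div_pos (Real.log_pos one_lt_two) (by norm_num), fun t ht => ?_⟩
  rcases lt_or_ge t 576 with ht' | ht'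
  · refine ⟨fun _ _ _ => 0, fun n f => weightedPrimeAvg f (2 ^ n), fun f hf =>
      ⟨fun n _ x => (zero_add _).symm, fun l hl => ?_, (l2_small t ht' f hf).trans ?_⟩⟩
    · have rhs_nonneg : 0 ≤ (2 ^ 17 * 160 + C₁ + C₂) * t * ∑' m : ℤ, ‖f m‖ := by positivity
      simpa [hl.not_gt] using rhs_nonneg
    · gcongr
      linarith
  · set m := ⌊√t⌋₊
    have m_pos : 0 < m := Nat.floor_pos.2 (Real.one_le_sqrt.2 (by linarith))
    have m_sq_le : (m : ℝ) ^ 2 ≤ t :=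
      (Real.le_sqrt' (Nat.cast_pos.2 m_pos)).1 (Nat.floor_le t.sqrt_nonneg)
    refine ⟨PrimeAverages.tamePart m,
      fun n f x => weightedPrimeAvg f (2 ^ n) x - PrimeAverages.tamePart m n f x, fun f hf =>
      ⟨fun n _ x => (add_sub_cancel _ _).symm, fun l hl => ?_, (l2_large t ht' f hf).trans ?_⟩⟩
    · obtain ⟨finite, weak⟩ := PrimeAverages.tamePart_weak_type hf m_pos hl
      refine ⟨finite, weak.trans ?_⟩
      gcongr
      linarith
    · gcongr
      linarith
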